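/- Let a = (φ, ν) be a ribbon with σ(a) ∉ {−2, 2}, and let ā = (φ, −ν) be the ribbon obtained from a by reversing the sign of every node. Then γ(a) + γ(ā) ≥ 2 + |σ(a)|/2. -/

import Mathlib

open scoped RealInnerProductSpace

noncomputable section

abbrev E2 : Type := EuclideanSpace ℝ (Fin 2)

/-- The point (cos t, sin t) on the unit circle in ℝ². -/
def sphPt (t : ℝ) : E2 := (EuclideanSpace.equiv (Fin 2) ℝ).symm ![Real.cos t, Real.sin t]

/-- A ribbon with `n` nodes, encoded via the angle parametrization `g = φ ∘ (cos, sin)`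
of a C^∞ function `φ : S¹ → ℝ` whose critical points on the circle are exactly the `n`
nondegenerate local extrema (nodes) at angles `θ 0 < θ 1 < ⋯ < θ (n-1)` in `[0, 2π)`,
with pairwise distinct critical values, together with a marking `ν` of the nodes by `±1`. -/
structure Ribbon (n : ℕ) : Type where
  g : ℝ → ℝ
  θ : Fin n → ℝ
  ν : Fin n → ℤ
  n_even : Even n
  n_pos : 0 < n
  smooth_g : ContDiff ℝ (⊤ : ℕ∞) g
  periodic_g : Function.Periodic g (2 * Real.pi)
  theta_mem : ∀ i, θ i ∈ Set.Ico (0 : ℝ) (2 * Real.pi)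
  theta_mono : StrictMono θ
  node_crit : ∀ i, deriv g (θ i) = 0
  node_nondeg : ∀ i, deriv (deriv g) (θ i) ≠ 0
  crit_only : ∀ t ∈ Set.Ico (0 : ℝ) (2 * Real.pi), deriv g t = 0 → ∃ i, t = θ i
  values_distinct : ∀ i j, g (θ i) = g (θ j) → i = j
  nu_sign : ∀ i, ν i = 1 ∨ ν i = -1

/-- The signature σ = s₊ − s₋ of a ribbon. -/
def Ribbon.sigma {n : ℕ} (a : Ribbon n) : ℤ := ∑ i, a.ν i

/-- Critical points of `f` in the open unit disk. -/
def critPts (f : E2 → ℝ) : Set E2 :=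
  {x | x ∈ Metric.ball (0 : E2) 1 ∧ fderiv ℝ f x = 0}

/-- `f : ℝ² → ℝ` is an extension of the ribbon `a`: it is C^∞, agrees with `φ` on the unit
circle, has nowhere-vanishing gradient on the circle, and at each node the radial derivative
`⟪∇f(p), p⟫` has sign `ν p` if `p` is a local maximum of `φ` (second derivative of `g`
negative there) and sign `−ν p` if `p` is a local minimum of `φ`. -/
def IsExtension {n : ℕ} (a : Ribbon n) (f : E2 → ℝ) : Prop :=
  ContDiff ℝ (⊤ : ℕ∞) f ∧
  (∀ t : ℝ, f (sphPt t) = a.g t) ∧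
  (∀ x ∈ Metric.sphere (0 : E2) 1, fderiv ℝ f x ≠ 0) ∧
  (∀ i : Fin n,
    (deriv (deriv a.g) (a.θ i) < 0 →
      0 < (a.ν i : ℝ) * ⟪gradient f (sphPt (a.θ i)), sphPt (a.θ i)⟫) ∧
    (0 < deriv (deriv a.g) (a.θ i) →
      (a.ν i : ℝ) * ⟪gradient f (sphPt (a.θ i)), sphPt (a.θ i)⟫ < 0))

/-- The ribbon invariant γ: the infimum, over all extensions `f` of `a`, of the number of
critical points of `f` in the open unit disk (a value in `ℕ∞`). -/
def gammaR {n : ℕ} (a : Ribbon n) : ℕ∞ :=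
  sInf {k : ℕ∞ | ∃ f : E2 → ℝ, IsExtension a f ∧ (critPts f).encard = k}

/-!
For an extension `f` of `a`, the tangential component of `∇f` on the unit circle vanishes exactly
at the nodes, where the marking tells whether the radial component points outwards or inwards.
Counting half turns between consecutive nodes shows that `∇f` winds `1 - σ(a) / 2` times around the
origin. On the other hand, this winding number is a sum of local contributions of the critical
points in the disk, each at most `1`, because an isolated critical point of a function of two
variables has index at most `1`. Hence `γ(a) ≥ 1 - σ(a) / 2`, and `γ(a) ≥ 1` unless `σ(a) = 2`;
apply the first bound to one of `a`, `ā` and the second one to the other.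

The bound on the index is proved combinatorially, on a fine triangular grid. The gradient of the
piecewise linear interpolation of `f` winds around a vertex `v` as often as
`1 - #(lower edges) + #(lower triangles)` at `v` says. Summing over the vertices of a level band
around the critical point gives the Euler characteristic of a pair of planar complexes, whose mod 2
homology satisfies `dim H₀ ≤ 1`, `dim H₂ ≤ 1`, and at least one of the two vanishes.
-/

section LinearAlgebra

open Module

theorem finrank_le_one_of_forall_eq_zero {F V : Type*} [Field F] [AddCommGroup V] [Module F V]
    (K : Submodule F V) (f : V →ₗ[F] F) (hf : ∀ x ∈ K, f x = 0 → x = 0) : finrank F K ≤ 1 := by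
  have hinj : Function.Injective (f.domRestrict K) :=
    LinearMap.ker_eq_bot'.2 (fun x hx => Subtype.ext (hf x x.2 hx)) |> LinearMap.ker_eq_bot.1
  simpa using LinearMap.finrank_le_finrank_of_injective hinj

theorem finrank_add_finrank_le_one {F V W : Type*} [Field F] [AddCommGroup V] [Module F V]
    [AddCommGroup W] [Module F W] {K : Submodule F V} {L : Submodule F W}
    (hK : finrank F K ≤ 1) (hL : finrank F L ≤ 1) (hKL : ∀ x ∈ K, ∀ y ∈ L, x = 0 ∨ y = 0) :
    finrank F K + finrank F L ≤ 1 := by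
  by_cases hbot : K = ⊥
  · rwa [hbot, finrank_bot, zero_add]
  · obtain ⟨x, hx, hx0⟩ := K.ne_bot_iff.1 hbot
    have hL0 : L = ⊥ := L.eq_bot_iff.2 fun y hy => (hKL x hx y hy).resolve_left hx0
    rwa [hL0, finrank_bot, add_zero]

theorem card_add_card_le_of_transpose_mul_eq_zero {F l m n : Type*} [Field F] [Fintype l]
    [Fintype m] [Fintype n] {A : Matrix m l F} {B : Matrix m n F} (h : A.transpose * B = 0) :
    Fintype.card l + Fintype.card n ≤ Fintype.card m +
      (finrank F (LinearMap.ker A.mulVecLin) + finrank F (LinearMap.ker B.mulVecLin)) := by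
  have hA := A.mulVecLin.finrank_range_add_finrank_ker
  have hB := B.mulVecLin.finrank_range_add_finrank_ker
  have hAB := Matrix.rank_add_rank_le_card_of_mul_eq_zero h
  rw [Matrix.rank_transpose] at hAB
  simp only [Matrix.rank, finrank_fintype_fun_eq_card] at hA hB hAB
  lia

end LinearAlgebra

section Incidence

variable {α β : Type*}

/-- The mod 2 incidence matrix of a relation between two finite sets: the boundary and coboundary
maps of a simplicial complex in degrees where simplices are compared by inclusion. -/
def incidence (r : α → β → Prop) [∀ a, DecidablePred (r a)] (s : Finset α) (t : Finset β) :
    Matrix s t (ZMod 2) :=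
  Matrix.of fun a b => if r a b then 1 else 0

/-- A function on a finite set extended by zero: chains on finitely many simplices, evaluated at
arbitrary simplices. -/
def zeroExtend {t : Finset β} (f : t → ZMod 2) : β → ZMod 2 := Function.extend (↑) f 0

/-- Evaluation of `zeroExtend` at a point, as a linear functional. -/
def zeroExtendLinear {t : Finset β} (b : β) : (t → ZMod 2) →ₗ[ZMod 2] ZMod 2 :=
  LinearMap.proj b ∘ₗ Function.ExtendByZero.linearMap (ZMod 2) ((↑) : t → β)

theorem zeroExtend_coe {t : Finset β} (f : t → ZMod 2) (b : t) : zeroExtend f b = f b :=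
  Subtype.val_injective.extend_apply f 0 b

theorem mem_of_zeroExtend_ne_zero {t : Finset β} {f : t → ZMod 2} {b : β}
    (h : zeroExtend f b ≠ 0) : b ∈ t := by
  by_contra hb
  exact h (Function.extend_apply' _ _ _ fun ⟨b', hb'⟩ => hb (hb' ▸ b'.2))

theorem eq_zero_of_zeroExtend_eq_zero {t : Finset β} {f : t → ZMod 2}
    (h : ∀ b ∈ t, zeroExtend f b = 0) : f = 0 := by
  ext b
  rw [← zeroExtend_coe f b, h b b.2, Pi.zero_apply]

theorem incidence_mulVec_apply (r : α → β → Prop) [∀ a, DecidablePred (r a)] (s : Finset α)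
    (t : Finset β) (f : t → ZMod 2) (a : s) :
    (incidence r s t).mulVec f a = ∑ b ∈ t with r a b, zeroExtend f b := by
  rw [Finset.sum_filter, ← Finset.sum_coe_sort t]
  simp only [Matrix.mulVec, dotProduct, incidence, Matrix.of_apply, zeroExtend_coe, ite_mul,
    one_mul, zero_mul]

theorem zeroExtend_eq_of_incidence_mulVec_eq_zero {r : α → β → Prop}
    [∀ a, DecidablePred (r a)] {s : Finset α} {t : Finset β} {f : t → ZMod 2}
    (hf : (incidence r s t).mulVec f = 0) {a : α} (ha : a ∈ s) {x y : β} (hxy : x ≠ y)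
    (hx : r a x) (hy : r a y) (h : ∀ b ∈ t, r a b → b = x ∨ b = y) :
    zeroExtend f x = zeroExtend f y := by
  classical
  have hsum : ∑ b ∈ t with r a b, zeroExtend f b = ∑ b ∈ {x, y}, zeroExtend f b := by
    refine Finset.sum_subset (fun b hb => ?_) fun b hb hb' => ?_
    · simpa using h b (Finset.mem_filter.1 hb).1 (Finset.mem_filter.1 hb).2
    · have hrb : r a b := by
        rcases Finset.mem_insert.1 hb with rfl | hb
        exacts [hx, Finset.mem_singleton.1 hb ▸ hy]
      by_contra hne
      exact hb' (Finset.mem_filter.2 ⟨mem_of_zeroExtend_ne_zero hne, hrb⟩)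
  have h0 : zeroExtend f x + zeroExtend f y = 0 := by
    rw [← Finset.sum_pair hxy, ← hsum, ← incidence_mulVec_apply r s t f ⟨a, ha⟩, hf, Pi.zero_apply]
  exact CharTwo.add_eq_zero.1 h0

theorem incidence_transpose_mul_apply {γ : Type*} (q : α → β → Prop) (r : α → γ → Prop)
    [∀ a, DecidablePred (q a)] [∀ a, DecidablePred (r a)] (s : Finset α) (t : Finset β)
    (u : Finset γ) (b : t) (c : u) :
    ((incidence q s t).transpose * incidence r s u) b c =
      ((s.filter fun a => q a b ∧ r a c).card : ZMod 2) := by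
  rw [← Finset.sum_boole, ← Finset.sum_coe_sort s]
  simp only [Matrix.mul_apply, Matrix.transpose_apply, incidence, Matrix.of_apply, ite_and,
    ite_mul, one_mul, zero_mul]

end Incidence

section HexLattice

/-- The directions from a vertex of the triangular lattice to its six neighbours, in cyclic order.
The lattice is the grid `ℤ × ℤ` with every unit square cut along its diagonal `(1, 1)`. -/
def hexDir : Fin 6 → ℤ × ℤ := ![(1, 0), (1, 1), (0, 1), (-1, 0), (-1, -1), (0, -1)]

theorem hexDir_injective : Function.Injective hexDir := by decide

theorem hexDir_ne_zero (k : Fin 6) : hexDir k ≠ 0 := by revert k; decide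

theorem hexDir_add_hexDir_add_two (k : Fin 6) : hexDir k + hexDir (k + 2) = hexDir (k + 1) := by
  revert k; decide

theorem hexDir_add_three (k : Fin 6) : hexDir (k + 3) = -hexDir k := by
  revert k; decide

theorem add_hexDir_ne_self (v : ℤ × ℤ) (k : Fin 6) : v + hexDir k ≠ v := by
  simpa using hexDir_ne_zero k

/-- The edge of the triangular lattice from `v` in direction `k`, as a set of two vertices. -/
def hexEdge (v : ℤ × ℤ) (k : Fin 6) : Finset (ℤ × ℤ) := {v, v + hexDir k}

/-- The triangle of the triangular lattice spanned at `v` by the directions `k` and `k + 1`. -/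
def hexTriangle (v : ℤ × ℤ) (k : Fin 6) : Finset (ℤ × ℤ) :=
  {v, v + hexDir k, v + hexDir (k + 1)}

theorem mem_hexEdge {v x : ℤ × ℤ} {k : Fin 6} : x ∈ hexEdge v k ↔ x = v ∨ x = v + hexDir k := by
  simp only [hexEdge, Finset.mem_insert, Finset.mem_singleton]

theorem mem_hexTriangle {v x : ℤ × ℤ} {k : Fin 6} :
    x ∈ hexTriangle v k ↔ x = v ∨ x = v + hexDir k ∨ x = v + hexDir (k + 1) := by
  simp only [hexTriangle, Finset.mem_insert, Finset.mem_singleton]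

theorem hexEdge_symm (v : ℤ × ℤ) (k : Fin 6) : hexEdge (v + hexDir k) (k + 3) = hexEdge v k := by
  rw [hexEdge, hexEdge, hexDir_add_three, add_neg_cancel_right, Finset.pair_comm]

theorem hexEdge_injective (v : ℤ × ℤ) : Function.Injective (hexEdge v) := by
  intro k l h
  have hmem : v + hexDir k ∈ hexEdge v l := h ▸ mem_hexEdge.2 (.inr rfl)
  exact hexDir_injective
    (add_left_cancel ((mem_hexEdge.1 hmem).resolve_left (add_hexDir_ne_self v k)))

theorem hexTriangle_rotate (v : ℤ × ℤ) (k : Fin 6) :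
    hexTriangle (v + hexDir k) (k + 2) = hexTriangle v k := by
  have hthird : v + hexDir k + hexDir (k + 2) = v + hexDir (k + 1) := by
    rw [add_assoc, hexDir_add_hexDir_add_two]
  have hback : v + hexDir k + hexDir (k + 2 + 1) = v := by
    rw [add_assoc k, show (2 + 1 : Fin 6) = 3 from rfl, hexDir_add_three, add_neg_cancel_right]
  ext x
  rw [mem_hexTriangle, mem_hexTriangle, hthird, hback]
  tauto

theorem exists_hexTriangle_eq_of_mem {v w : ℤ × ℤ} {k : Fin 6} (h : w ∈ hexTriangle v k) :
    ∃ l, hexTriangle v k = hexTriangle w l := by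
  rcases mem_hexTriangle.1 h with rfl | rfl | rfl
  · exact ⟨k, rfl⟩
  · exact ⟨k + 2, (hexTriangle_rotate v k).symm⟩
  · refine ⟨k + 2 + 2, ?_⟩
    rw [← hexDir_add_hexDir_add_two, ← add_assoc, hexTriangle_rotate, hexTriangle_rotate]

theorem eq_or_eq_of_hexEdge_subset_hexTriangle {v : ℤ × ℤ} {k l : Fin 6}
    (h : hexEdge v k ⊆ hexTriangle v l) : l = k ∨ l + 1 = k := by
  rcases mem_hexTriangle.1 (h (mem_hexEdge.2 (.inr rfl))) with h | h | h
  · exact absurd h (add_hexDir_ne_self v k)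
  · exact .inl (hexDir_injective (add_left_cancel h)).symm
  · exact .inr (hexDir_injective (add_left_cancel h)).symm

theorem hexEdge_subset_hexTriangle (v : ℤ × ℤ) (k : Fin 6) : hexEdge v k ⊆ hexTriangle v k := by
  intro x hx
  rw [mem_hexTriangle, ← or_assoc]
  exact .inl (mem_hexEdge.1 hx)

theorem hexEdge_succ_subset_hexTriangle (v : ℤ × ℤ) (k : Fin 6) :
    hexEdge v (k + 1) ⊆ hexTriangle v k := by
  intro x hx
  rw [mem_hexTriangle]
  exact (mem_hexEdge.1 hx).imp_right .inr

theorem hexTriangle_injective (v : ℤ × ℤ) : Function.Injective (hexTriangle v) := by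
  intro k l h
  have h1 := eq_or_eq_of_hexEdge_subset_hexTriangle (h ▸ hexEdge_subset_hexTriangle v k)
  have h2 := eq_or_eq_of_hexEdge_subset_hexTriangle (h ▸ hexEdge_succ_subset_hexTriangle v k)
  clear h
  revert h1 h2 k l
  decide

theorem card_hexTriangle (v : ℤ × ℤ) (k : Fin 6) : (hexTriangle v k).card = 3 := by
  have hsucc : ∀ k : Fin 6, k ≠ k + 1 := by decide
  have hne : v + hexDir k ≠ v + hexDir (k + 1) := fun h =>
    hsucc k (hexDir_injective (add_left_cancel h))
  exact Finset.card_eq_three.2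
    ⟨_, _, _, (add_hexDir_ne_self v k).symm, (add_hexDir_ne_self v (k + 1)).symm, hne, rfl⟩

theorem exists_eq_add_hexDir_of_mem_hexTriangle {v x y : ℤ × ℤ} {k : Fin 6}
    (hx : x ∈ hexTriangle v k) (hy : y ∈ hexTriangle v k) (hyx : y ≠ x) :
    ∃ l, y = x + hexDir l := by
  obtain ⟨l, hl⟩ := exists_hexTriangle_eq_of_mem hx
  rcases mem_hexTriangle.1 (hl ▸ hy) with h | h | h
  exacts [absurd h hyx, ⟨_, h⟩, ⟨_, h⟩]

end HexLattice

section Euler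

variable {α : Type*} [LinearOrder α]

/-- The index at the lattice vertex `v` of a function `key` without ties: one minus the Euler
characteristic of the lower link of `v`. For a piecewise linear function on the triangulated plane
it is the index of the gradient at `v`. -/
def discreteIndex (key : ℤ × ℤ → α) (v : ℤ × ℤ) : ℤ :=
  1 - (Finset.univ.filter fun k : Fin 6 => key (v + hexDir k) < key v).card +
    (Finset.univ.filter fun k : Fin 6 =>
      key (v + hexDir k) < key v ∧ key (v + hexDir (k + 1)) < key v).card

/-- The edges of the lattice whose `key`-larger endpoint lies in `M`. -/
def lowerEdges (key : ℤ × ℤ → α) (M : Finset (ℤ × ℤ)) : Finset (Finset (ℤ × ℤ)) :=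
  M.biUnion fun v =>
    (Finset.univ.filter fun k : Fin 6 => key (v + hexDir k) < key v).image (hexEdge v)

/-- The triangles of the lattice whose `key`-largest vertex lies in `M`. -/
def lowerTriangles (key : ℤ × ℤ → α) (M : Finset (ℤ × ℤ)) : Finset (Finset (ℤ × ℤ)) :=
  M.biUnion fun v => (Finset.univ.filter fun k : Fin 6 =>
    key (v + hexDir k) < key v ∧ key (v + hexDir (k + 1)) < key v).image (hexTriangle v)

theorem card_biUnion_image_of_top {ι κ : Type*} [DecidableEq ι] {f : ι → α}
    {cell : ι → κ → Finset ι} (M : Finset ι) (A : ι → Finset κ)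
    (hinj : ∀ v, Function.Injective (cell v)) (hmem : ∀ v k, v ∈ cell v k)
    (htop : ∀ v, ∀ k ∈ A v, ∀ x ∈ cell v k, x ≠ v → f x < f v) :
    (M.biUnion fun v => (A v).image (cell v)).card = ∑ v ∈ M, (A v).card := by
  rw [Finset.card_biUnion]
  · exact Finset.sum_congr rfl fun v _ => Finset.card_image_of_injective _ (hinj v)
  · intro v _ w _ hvw
    rw [Function.onFun, Finset.disjoint_left]
    intro c hcv hcw
    obtain ⟨k, hk, rfl⟩ := Finset.mem_image.1 hcv
    obtain ⟨l, hl, hlk⟩ := Finset.mem_image.1 hcw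
    exact lt_asymm (htop v k hk w (hlk ▸ hmem w l) hvw.symm) (htop w l hl v (hlk ▸ hmem v k) hvw)

theorem card_lowerEdges (key : ℤ × ℤ → α) (M : Finset (ℤ × ℤ)) : (lowerEdges key M).card =
    ∑ v ∈ M, (Finset.univ.filter fun k : Fin 6 => key (v + hexDir k) < key v).card := by
  refine card_biUnion_image_of_top (f := key) M _ hexEdge_injective
    (fun v k => mem_hexEdge.2 (.inl rfl)) fun v k hk x hx hxv => ?_
  rw [(mem_hexEdge.1 hx).resolve_left hxv]
  exact (Finset.mem_filter.1 hk).2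

theorem card_lowerTriangles (key : ℤ × ℤ → α) (M : Finset (ℤ × ℤ)) : (lowerTriangles key M).card =
    ∑ v ∈ M, (Finset.univ.filter fun k : Fin 6 =>
      key (v + hexDir k) < key v ∧ key (v + hexDir (k + 1)) < key v).card := by
  refine card_biUnion_image_of_top (f := key) M _ hexTriangle_injective
    (fun v k => mem_hexTriangle.2 (.inl rfl)) fun v k hk x hx hxv => ?_
  rcases (mem_hexTriangle.1 hx).resolve_left hxv with rfl | rfl
  exacts [(Finset.mem_filter.1 hk).2.1, (Finset.mem_filter.1 hk).2.2]

theorem sum_discreteIndex (key : ℤ × ℤ → α) (M : Finset (ℤ × ℤ)) :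
    ∑ v ∈ M, discreteIndex key v =
      (M.card : ℤ) - (lowerEdges key M).card + (lowerTriangles key M).card := by
  rw [card_lowerEdges, card_lowerTriangles]
  simp only [discreteIndex, Finset.sum_add_distrib, Finset.sum_sub_distrib, Finset.sum_const,
    nsmul_eq_mul, mul_one, Nat.cast_sum]

variable {key : ℤ × ℤ → α} {M : Finset (ℤ × ℤ)}

theorem mem_lowerEdges {e : Finset (ℤ × ℤ)} : e ∈ lowerEdges key M ↔
    ∃ v ∈ M, ∃ k, key (v + hexDir k) < key v ∧ hexEdge v k = e := by
  simp only [lowerEdges, Finset.mem_biUnion, Finset.mem_image, Finset.mem_filter, Finset.mem_univ,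
    true_and]

theorem mem_lowerTriangles {T : Finset (ℤ × ℤ)} : T ∈ lowerTriangles key M ↔
    ∃ v ∈ M, ∃ k, (key (v + hexDir k) < key v ∧ key (v + hexDir (k + 1)) < key v) ∧
      hexTriangle v k = T := by
  simp only [lowerTriangles, Finset.mem_biUnion, Finset.mem_image, Finset.mem_filter,
    Finset.mem_univ, true_and]

theorem exists_top_of_mem_lowerTriangles {T : Finset (ℤ × ℤ)} (hT : T ∈ lowerTriangles key M) :
    ∃ t ∈ M, (∀ x ∈ T, key x ≤ key t) ∧ ∃ l, hexTriangle t l = T := by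
  obtain ⟨t, ht, l, hlt, rfl⟩ := mem_lowerTriangles.1 hT
  refine ⟨t, ht, fun x hx => ?_, l, rfl⟩
  rcases mem_hexTriangle.1 hx with rfl | rfl | rfl
  exacts [le_rfl, hlt.1.le, hlt.2.le]

/-- `M` is convex for the preorder that `key` induces on the lattice, so that the cells with largest
vertex in `M` form the difference of two sublevel complexes of `key`. -/
def OrderConvex (key : ℤ × ℤ → α) (M : Finset (ℤ × ℤ)) : Prop :=
  ∀ ⦃x⦄, x ∈ M → ∀ ⦃z⦄, z ∈ M → ∀ ⦃y⦄, key x ≤ key y → key y ≤ key z → y ∈ M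

/-- Two adjacent vertices of the lattice, both in `C`. -/
def HexStep (C : Finset (ℤ × ℤ)) (v w : ℤ × ℤ) : Prop :=
  v ∈ C ∧ w ∈ C ∧ ∃ k, w = v + hexDir k

/-- The mod 2 coboundary from vertices in `M` to edges. -/
def vertexIncidence (key : ℤ × ℤ → α) (M : Finset (ℤ × ℤ)) : Matrix (lowerEdges key M) M (ZMod 2) :=
  incidence (fun e v => v ∈ e) (lowerEdges key M) M

/-- The mod 2 boundary from triangles to edges with largest vertex in `M`. -/
def triangleIncidence (key : ℤ × ℤ → α) (M : Finset (ℤ × ℤ)) :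
    Matrix (lowerEdges key M) (lowerTriangles key M) (ZMod 2) :=
  incidence (fun e T => e ⊆ T) (lowerEdges key M) (lowerTriangles key M)

theorem OrderConvex.hexEdge_mem_lowerEdges (hM : OrderConvex key M) (hkey : Function.Injective key)
    {v z : ℤ × ℤ} {k : Fin 6} (hv : v ∈ M) (hz : z ∈ M) (hkz : key (v + hexDir k) ≤ key z) :
    hexEdge v k ∈ lowerEdges key M := by
  rcases lt_or_ge (key (v + hexDir k)) (key v) with hlt | hge
  · exact mem_lowerEdges.2 ⟨v, hv, k, hlt, rfl⟩
  · refine mem_lowerEdges.2 ⟨v + hexDir k, hM hv hz hge hkz, k + 3, ?_, hexEdge_symm v k⟩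
    rw [hexDir_add_three, add_neg_cancel_right]
    exact hge.lt_of_ne (hkey.ne (add_hexDir_ne_self v k)).symm

theorem OrderConvex.filter_lowerEdges_eq_image (hM : OrderConvex key M)
    (hkey : Function.Injective key) {T : Finset (ℤ × ℤ)} (hT : T ∈ lowerTriangles key M)
    {u : ℤ × ℤ} (hu : u ∈ M) (huT : u ∈ T) :
    ((lowerEdges key M).filter fun e => u ∈ e ∧ e ⊆ T) = (T.erase u).image fun y => {u, y} := by
  obtain ⟨t, ht, htop, l, rfl⟩ := exists_top_of_mem_lowerTriangles hT
  ext e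
  simp only [Finset.mem_filter, Finset.mem_image, Finset.mem_erase]
  constructor
  · rintro ⟨he, hue, heT⟩
    obtain ⟨v, -, k, -, rfl⟩ := mem_lowerEdges.1 he
    rcases mem_hexEdge.1 hue with rfl | rfl
    · exact ⟨_, ⟨add_hexDir_ne_self _ k, heT (mem_hexEdge.2 (.inr rfl))⟩, rfl⟩
    · exact ⟨v, ⟨(add_hexDir_ne_self v k).symm, heT (mem_hexEdge.2 (.inl rfl))⟩,
        Finset.pair_comm _ _⟩
  · rintro ⟨y, ⟨hyu, hyT⟩, rfl⟩
    obtain ⟨k, rfl⟩ := exists_eq_add_hexDir_of_mem_hexTriangle huT hyT hyu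
    exact ⟨hM.hexEdge_mem_lowerEdges hkey hu ht (htop _ hyT), Finset.mem_insert_self _ _,
      Finset.insert_subset huT (Finset.singleton_subset_iff.2 hyT)⟩

theorem OrderConvex.vertexIncidence_transpose_mul_triangleIncidence (hM : OrderConvex key M)
    (hkey : Function.Injective key) :
    (vertexIncidence key M).transpose * triangleIncidence key M = 0 := by
  ext ⟨u, hu⟩ ⟨T, hT⟩
  rw [vertexIncidence, triangleIncidence, incidence_transpose_mul_apply, Matrix.zero_apply]
  by_cases huT : u ∈ T
  · have hpair : Set.InjOn (fun y => ({u, y} : Finset (ℤ × ℤ))) (T.erase u) := by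
      intro y hy z _ hyz
      have hmem : y ∈ ({u, z} : Finset (ℤ × ℤ)) := by
        rw [← show ({u, y} : Finset (ℤ × ℤ)) = {u, z} from hyz]
        exact Finset.mem_insert_of_mem (Finset.mem_singleton_self y)
      exact Finset.mem_singleton.1
        ((Finset.mem_insert.1 hmem).resolve_left (Finset.mem_erase.1 hy).1)
    obtain ⟨t, -, -, l, rfl⟩ := exists_top_of_mem_lowerTriangles hT
    rw [hM.filter_lowerEdges_eq_image hkey hT hu huT, Finset.card_image_of_injOn hpair,
      Finset.card_erase_of_mem huT, card_hexTriangle]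
    rfl
  · rw [Finset.filter_false_of_mem fun e _ he => huT (he.2 he.1), Finset.card_empty, Nat.cast_zero]

theorem zeroExtend_add_hexDir {φ : M → ZMod 2} (hφ : (vertexIncidence key M).mulVec φ = 0)
    {v : ℤ × ℤ} {k : Fin 6} (he : hexEdge v k ∈ lowerEdges key M) :
    zeroExtend φ (v + hexDir k) = zeroExtend φ v :=
  (zeroExtend_eq_of_incidence_mulVec_eq_zero hφ he (add_hexDir_ne_self v k).symm
    (mem_hexEdge.2 (.inl rfl)) (mem_hexEdge.2 (.inr rfl)) fun _ _ => mem_hexEdge.1).symm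

theorem OrderConvex.zeroExtend_eq_of_hexStep (hM : OrderConvex key M)
    (hkey : Function.Injective key) {φ : M → ZMod 2}
    (hφ : (vertexIncidence key M).mulVec φ = 0) {v w : ℤ × ℤ} (hvw : HexStep M v w) :
    zeroExtend φ w = zeroExtend φ v := by
  obtain ⟨hv, hw, k, rfl⟩ := hvw
  exact zeroExtend_add_hexDir hφ (hM.hexEdge_mem_lowerEdges hkey hv hw le_rfl)

theorem OrderConvex.zeroExtend_hexTriangle_succ (hM : OrderConvex key M)
    (hkey : Function.Injective key) {S : lowerTriangles key M → ZMod 2}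
    (hS : (triangleIncidence key M).mulVec S = 0) {v : ℤ × ℤ} (hv : v ∈ M) (k : Fin 6) :
    zeroExtend S (hexTriangle v (k + 1)) = zeroExtend S (hexTriangle v k) := by
  have hsub : hexEdge v (k + 1) ⊆ hexTriangle v (k + 1) := hexEdge_subset_hexTriangle v (k + 1)
  have hsub' : hexEdge v (k + 1) ⊆ hexTriangle v k := hexEdge_succ_subset_hexTriangle v k
  by_cases htop : ∃ z ∈ M, key (v + hexDir (k + 1)) ≤ key z
  · obtain ⟨z, hz, hkz⟩ := htop
    have hsucc : ∀ k : Fin 6, k + 1 ≠ k := by decide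
    have hne : hexTriangle v (k + 1) ≠ hexTriangle v k := (hexTriangle_injective v).ne (hsucc k)
    refine zeroExtend_eq_of_incidence_mulVec_eq_zero hS
      (hM.hexEdge_mem_lowerEdges hkey hv hz hkz) hne hsub hsub' fun T hT heT => ?_
    obtain ⟨t, -, -, l, rfl⟩ := exists_top_of_mem_lowerTriangles hT
    obtain ⟨l', hl'⟩ := exists_hexTriangle_eq_of_mem (heT (mem_hexEdge.2 (.inl rfl)))
    rw [hl'] at heT ⊢
    rcases eq_or_eq_of_hexEdge_subset_hexTriangle heT with rfl | hlk
    exacts [.inl rfl, .inr (congrArg _ (add_right_cancel hlk))]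
  · have hzero : ∀ T, hexEdge v (k + 1) ⊆ T → zeroExtend S T = 0 := by
      intro T hT
      by_contra hne
      obtain ⟨t, ht, hmax, -⟩ := exists_top_of_mem_lowerTriangles (mem_of_zeroExtend_ne_zero hne)
      exact htop ⟨t, ht, hmax _ (hT (mem_hexEdge.2 (.inr rfl)))⟩
    rw [hzero _ hsub, hzero _ hsub']

theorem OrderConvex.zeroExtend_hexTriangle (hM : OrderConvex key M)
    (hkey : Function.Injective key) {S : lowerTriangles key M → ZMod 2}
    (hS : (triangleIncidence key M).mulVec S = 0) {v : ℤ × ℤ} (hv : v ∈ M) (k : Fin 6) :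
    zeroExtend S (hexTriangle v k) = zeroExtend S (hexTriangle v 0) := by
  induction k using Fin.induction with
  | zero => rfl
  | succ i ih => rw [← Fin.coeSucc_eq_succ, hM.zeroExtend_hexTriangle_succ hkey hS hv, ih]

theorem OrderConvex.zeroExtend_hexTriangle_eq_of_hexStep (hM : OrderConvex key M)
    (hkey : Function.Injective key) {S : lowerTriangles key M → ZMod 2}
    (hS : (triangleIncidence key M).mulVec S = 0) {v w : ℤ × ℤ} (hvw : HexStep M v w) :
    zeroExtend S (hexTriangle w 0) = zeroExtend S (hexTriangle v 0) := by
  obtain ⟨hv, hw, k, rfl⟩ := hvw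
  rw [← hM.zeroExtend_hexTriangle hkey hS hv k, ← hM.zeroExtend_hexTriangle hkey hS hw (k + 2),
    hexTriangle_rotate]

theorem OrderConvex.add_hexDir_mem_of_zeroExtend_ne_zero (hM : OrderConvex key M)
    (hkey : Function.Injective key) {S : lowerTriangles key M → ZMod 2}
    (hS : (triangleIncidence key M).mulVec S = 0) {v : ℤ × ℤ} (hv : v ∈ M)
    (hSv : zeroExtend S (hexTriangle v 0) ≠ 0) {k : Fin 6} (hk : key v ≤ key (v + hexDir k)) :
    v + hexDir k ∈ M := by
  rw [← hM.zeroExtend_hexTriangle hkey hS hv k] at hSv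
  obtain ⟨z, hz, hmax, -⟩ := exists_top_of_mem_lowerTriangles (mem_of_zeroExtend_ne_zero hSv)
  exact hM hv hz hk (hmax _ (mem_hexTriangle.2 (.inr (.inl rfl))))

theorem eq_of_reflTransGen {β γ : Type*} {r : β → β → Prop} {f : β → γ}
    (hf : ∀ x y, r x y → f y = f x) {x y : β} (h : Relation.ReflTransGen r x y) : f y = f x := by
  induction h with
  | refl => rfl
  | tail _ hyz ih => rw [hf _ _ hyz, ih]

variable {C : Set (ℤ × ℤ)} {c₀ : ℤ × ℤ}

theorem OrderConvex.eq_zero_of_vertexIncidence_mulVec_eq_zero (hM : OrderConvex key M)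
    (hkey : Function.Injective key) (hC : ∀ v ∈ C, Relation.ReflTransGen (HexStep M) c₀ v)
    (hlower : ∀ v ∈ M, v ∉ C → ∃ k, key (v + hexDir k) < key v) {φ : M → ZMod 2}
    (hφ : (vertexIncidence key M).mulVec φ = 0) (h₀ : zeroExtend φ c₀ = 0) : φ = 0 := by
  refine eq_zero_of_zeroExtend_eq_zero fun x hx => by_contra fun hxne => ?_
  obtain ⟨v, hv, hmin⟩ := (M.filter fun v => zeroExtend φ v ≠ 0).exists_min_image key
    ⟨x, Finset.mem_filter.2 ⟨hx, hxne⟩⟩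
  obtain ⟨hvM, hvne⟩ := Finset.mem_filter.1 hv
  have hvC : v ∉ C := fun hvC =>
    hvne ((eq_of_reflTransGen (f := zeroExtend φ)
      (fun _ _ => hM.zeroExtend_eq_of_hexStep hkey hφ) (hC v hvC)).trans h₀)
  obtain ⟨k, hk⟩ := hlower v hvM hvC
  have hne : zeroExtend φ (v + hexDir k) ≠ 0 := by
    rwa [zeroExtend_add_hexDir hφ (hM.hexEdge_mem_lowerEdges hkey hvM hvM hk.le)]
  exact hk.not_ge (hmin _ (Finset.mem_filter.2 ⟨mem_of_zeroExtend_ne_zero hne, hne⟩))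

theorem OrderConvex.eq_zero_of_triangleIncidence_mulVec_eq_zero (hM : OrderConvex key M)
    (hkey : Function.Injective key) (hC : ∀ v ∈ C, Relation.ReflTransGen (HexStep M) c₀ v)
    (hupper : ∀ v ∈ M, v ∉ C → ∃ k, key v < key (v + hexDir k)) {S : lowerTriangles key M → ZMod 2}
    (hS : (triangleIncidence key M).mulVec S = 0) (h₀ : zeroExtend S (hexTriangle c₀ 0) = 0) :
    S = 0 := by
  refine eq_zero_of_zeroExtend_eq_zero fun T hT => by_contra fun hTne => ?_
  obtain ⟨t, ht, -, l, rfl⟩ := exists_top_of_mem_lowerTriangles hT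
  rw [hM.zeroExtend_hexTriangle hkey hS ht] at hTne
  obtain ⟨v, hv, hmax⟩ := (M.filter fun v =>
    zeroExtend S (hexTriangle v 0) ≠ 0).exists_max_image key ⟨t, Finset.mem_filter.2 ⟨ht, hTne⟩⟩
  obtain ⟨hvM, hvne⟩ := Finset.mem_filter.1 hv
  have hvC : v ∉ C := fun hvC => hvne ((eq_of_reflTransGen
    (f := fun v => zeroExtend S (hexTriangle v 0))
    (fun _ _ => hM.zeroExtend_hexTriangle_eq_of_hexStep hkey hS) (hC v hvC)).trans h₀)
  obtain ⟨k, hk⟩ := hupper v hvM hvC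
  have hwM := hM.add_hexDir_mem_of_zeroExtend_ne_zero hkey hS hvM hvne hk.le
  have hne : zeroExtend S (hexTriangle (v + hexDir k) 0) ≠ 0 := by
    rwa [hM.zeroExtend_hexTriangle_eq_of_hexStep hkey hS ⟨hvM, hwM, k, rfl⟩]
  exact hk.not_ge (hmax _ (Finset.mem_filter.2 ⟨hwM, hne⟩))

-- A common support of `φ` and `S` would be invariant under the translation by `(1, 0)`.
theorem OrderConvex.zeroExtend_eq_zero_or (hM : OrderConvex key M) (hkey : Function.Injective key)
    {φ : M → ZMod 2} (hφ : (vertexIncidence key M).mulVec φ = 0) {S : lowerTriangles key M → ZMod 2}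
    (hS : (triangleIncidence key M).mulVec S = 0) (v : ℤ × ℤ) :
    zeroExtend φ v = 0 ∨ zeroExtend S (hexTriangle v 0) = 0 := by
  by_contra! hv
  obtain ⟨w, hw, hmax⟩ := (M.filter fun w => zeroExtend φ w ≠ 0 ∧
    zeroExtend S (hexTriangle w 0) ≠ 0).exists_max_image Prod.fst
      ⟨v, Finset.mem_filter.2 ⟨mem_of_zeroExtend_ne_zero hv.1, hv⟩⟩
  obtain ⟨hwM, hφw, hSw⟩ := Finset.mem_filter.1 hw
  have hnext : w + hexDir 0 ∈ M := by
    rcases le_total (key (w + hexDir 0)) (key w) with hle | hge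
    · refine mem_of_zeroExtend_ne_zero (f := φ) ?_
      rwa [zeroExtend_add_hexDir hφ (hM.hexEdge_mem_lowerEdges hkey hwM hwM hle)]
    · exact hM.add_hexDir_mem_of_zeroExtend_ne_zero hkey hS hwM hSw hge
  have hstep : HexStep M w (w + hexDir 0) := ⟨hwM, hnext, 0, rfl⟩
  have hle := hmax (w + hexDir 0) <| Finset.mem_filter.2 ⟨hnext,
    by rwa [hM.zeroExtend_eq_of_hexStep hkey hφ hstep],
    by rwa [hM.zeroExtend_hexTriangle_eq_of_hexStep hkey hS hstep]⟩
  simp [hexDir] at hle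

theorem OrderConvex.sum_discreteIndex_le_one (hM : OrderConvex key M)
    (hkey : Function.Injective key) (hC : ∀ v ∈ C, Relation.ReflTransGen (HexStep M) c₀ v)
    (hlower : ∀ v ∈ M, v ∉ C → ∃ k, key (v + hexDir k) < key v)
    (hupper : ∀ v ∈ M, v ∉ C → ∃ k, key v < key (v + hexDir k)) :
    ∑ v ∈ M, discreteIndex key v ≤ 1 := by
  have hcount := card_add_card_le_of_transpose_mul_eq_zero
    (hM.vertexIncidence_transpose_mul_triangleIncidence hkey)
  have hker := finrank_add_finrank_le_one
    (K := LinearMap.ker (vertexIncidence key M).mulVecLin)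
    (L := LinearMap.ker (triangleIncidence key M).mulVecLin)
    (finrank_le_one_of_forall_eq_zero _ (zeroExtendLinear c₀) fun φ hφ h₀ =>
      hM.eq_zero_of_vertexIncidence_mulVec_eq_zero hkey hC hlower hφ h₀)
    (finrank_le_one_of_forall_eq_zero _ (zeroExtendLinear (hexTriangle c₀ 0)) fun S hS h₀ =>
      hM.eq_zero_of_triangleIncidence_mulVec_eq_zero hkey hC hupper hS h₀)
    fun φ hφ S hS => (hM.zeroExtend_eq_zero_or hkey hφ hS c₀).imp
      (hM.eq_zero_of_vertexIncidence_mulVec_eq_zero hkey hC hlower hφ)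
      (hM.eq_zero_of_triangleIncidence_mulVec_eq_zero hkey hC hupper hS)
  rw [sum_discreteIndex]
  simp only [Fintype.card_coe] at hcount
  lia

/-- A vertex at which `key` increases along two consecutive directions and decreases along the two
opposite ones, as a function with nonvanishing gradient does. -/
def HexRegular (key : ℤ × ℤ → α) (v : ℤ × ℤ) : Prop :=
  ∃ k, key v < key (v + hexDir k) ∧ key v < key (v + hexDir (k + 1)) ∧
    key (v + hexDir (k + 3)) < key v ∧ key (v + hexDir (k + 4)) < key v

theorem HexRegular.discreteIndex_eq_zero {v : ℤ × ℤ} (h : HexRegular key v) :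
    discreteIndex key v = 0 := by
  have hcount : ∀ (b : Fin 6 → Bool) (k : Fin 6), b k = false → b (k + 1) = false →
      b (k + 3) = true → b (k + 4) = true →
      1 - ((Finset.univ.filter fun k => b k = true).card : ℤ) +
        (Finset.univ.filter fun k => b k = true ∧ b (k + 1) = true).card = 0 := by decide
  obtain ⟨k, h0, h1, h3, h4⟩ := h
  simpa only [discreteIndex, decide_eq_true_eq] using
    hcount (fun k => decide (key (v + hexDir k) < key v)) k
    (decide_eq_false h0.not_gt) (decide_eq_false h1.not_gt) (decide_eq_true h3) (decide_eq_true h4)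

theorem OrderConvex.sum_discreteIndex_le_one_of_hexRegular (hM : OrderConvex key M)
    (hkey : Function.Injective key) {C : Finset (ℤ × ℤ)} (hCM : C ⊆ M)
    (hC : ∀ v ∈ C, Relation.ReflTransGen (HexStep C) c₀ v)
    (hreg : ∀ v ∈ M, v ∉ C → HexRegular key v) : ∑ v ∈ C, discreteIndex key v ≤ 1 := by
  have hstep : ∀ v w, HexStep C v w → HexStep M v w := fun v w h => ⟨hCM h.1, hCM h.2.1, h.2.2⟩
  rw [Finset.sum_subset hCM fun v hv hvC => (hreg v hv hvC).discreteIndex_eq_zero]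
  exact hM.sum_discreteIndex_le_one (C := C) hkey
    (fun v hv => Relation.ReflTransGen.mono hstep _ _ (hC v hv))
    (fun v hv hvC => let ⟨_, _, _, h, _⟩ := hreg v hv hvC; ⟨_, h⟩)
    (fun v hv hvC => let ⟨_, h, _⟩ := hreg v hv hvC; ⟨_, h⟩)

end Euler

section Turning

open scoped Real

theorem arg_eq_arctan_of_re_pos {z : ℂ} (hz : 0 < z.re) : z.arg = Real.arctan (z.im / z.re) := by
  have harg := abs_lt.1 (Complex.abs_arg_lt_pi_div_two_iff.2 (.inl hz))
  rw [← Complex.tan_arg, Real.arctan_tan harg.1 harg.2]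

theorem ne_zero_of_re_pos {z : ℂ} (hz : 0 < z.re) : z ≠ 0 := by
  rintro rfl
  exact hz.ne' Complex.zero_re

theorem arg_div_of_re_pos {x y : ℂ} (hx : 0 < x.re) (hy : 0 < y.re) :
    (x / y).arg = x.arg - y.arg := by
  have hxarg := abs_lt.1 (Complex.abs_arg_lt_pi_div_two_iff.2 (.inl hx))
  have hyarg := abs_lt.1 (Complex.abs_arg_lt_pi_div_two_iff.2 (.inl hy))
  rw [← Complex.arg_coe_angle_toReal_eq_arg,
    Complex.arg_div_coe_angle (ne_zero_of_re_pos hx) (ne_zero_of_re_pos hy),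
    ← Real.Angle.coe_sub, Real.Angle.toReal_coe_eq_self_iff]
  constructor <;> linarith

theorem re_div_pos_of_norm_sub_lt {a c : ℂ} (h : ‖a - c‖ < ‖c‖) : 0 < (a / c).re := by
  have hc : 0 < ‖c‖ := (norm_nonneg _).trans_lt h
  have hdiv : ‖(a - c) / c‖ < 1 := by rwa [norm_div, div_lt_one hc]
  have hre := (abs_le.1 (Complex.abs_re_le_norm ((a - c) / c))).1
  rw [sub_div, div_self (norm_pos_iff.1 hc)] at hdiv hre
  rw [Complex.sub_re, Complex.one_re] at hre
  linarith

theorem re_div_pos_iff_inner_pos {x y : ℂ} : 0 < (x / y).re ↔ 0 < ⟪y, x⟫ := by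
  rcases eq_or_ne y 0 with rfl | hy
  · simp only [div_zero, Complex.zero_re, inner_zero_left]
  · have hre : (x / y).re = ⟪y, x⟫ / Complex.normSq y := by
      simp only [Complex.div_re, Complex.inner, Complex.mul_re, Complex.conj_re, Complex.conj_im]
      ring
    rw [hre, div_pos_iff_of_pos_right (Complex.normSq_pos.2 hy)]

/-- The oriented angle from `x` to `y`, antisymmetrised: it changes sign under swapping the vectors
even when they are opposite, so that the contributions of a shared edge cancel. -/
def turnAngle (x y : ℂ) : ℝ := ((y / x).arg - (x / y).arg) / 2

theorem turnAngle_swap (x y : ℂ) : turnAngle y x = -turnAngle x y := by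
  unfold turnAngle
  ring

theorem turnAngle_eq_arg_sub_arg {c x y : ℂ} (hx : 0 < (x / c).re) (hy : 0 < (y / c).re) :
    turnAngle x y = (y / c).arg - (x / c).arg := by
  have hc : c ≠ 0 := by
    rintro rfl
    exact hx.ne' (by rw [div_zero, Complex.zero_re])
  rw [turnAngle, ← div_div_div_cancel_right₀ hc y x, ← div_div_div_cancel_right₀ hc x y,
    arg_div_of_re_pos hy hx, arg_div_of_re_pos hx hy]
  ring

theorem sum_turnAngle_eq_sum_arg {n : ℕ} [NeZero n] {a c : Fin n → ℂ}
    (h : ∀ k, 0 < (a k / c k).re) (h' : ∀ k, 0 < (a k / c (k + 1)).re) :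
    ∑ k, turnAngle (a k) (a (k + 1)) = ∑ k, (c (k + 1) / c k).arg := by
  have hshift : ∑ k, (a (k + 1) / c (k + 1)).arg = ∑ k, (a k / c k).arg :=
    Equiv.sum_comp (Equiv.addRight 1) fun k => (a k / c k).arg
  have hstep : ∀ k, turnAngle (a k) (a (k + 1)) =
      (c (k + 1) / c k).arg + ((a (k + 1) / c (k + 1)).arg - (a k / c k).arg) := by
    intro k
    have ha : a k ≠ 0 := (div_ne_zero_iff.1 (ne_zero_of_re_pos (h k))).1
    rw [turnAngle_eq_arg_sub_arg (h' k) (h (k + 1)),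
      ← div_div_div_cancel_left' (c k) (c (k + 1)) ha, arg_div_of_re_pos (h k) (h' k)]
    ring
  simp only [hstep, Finset.sum_add_distrib, Finset.sum_sub_distrib, hshift, sub_self, add_zero]

/-- The direction `hexDir k` as a vector of the plane. -/
def hexVec : Fin 6 → ℂ :=
  ![1, 1 + Complex.I, Complex.I, -1, -1 - Complex.I, -Complex.I]

theorem hexVec_eq (k : Fin 6) : hexVec k = ⟨(hexDir k).1, (hexDir k).2⟩ := by
  fin_cases k <;> simp [hexVec, hexDir, Complex.ext_iff]

theorem hexVec_ne_zero (k : Fin 6) : hexVec k ≠ 0 := by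
  fin_cases k <;> simp [hexVec, Complex.ext_iff]

theorem hexVec_succ_div (k : Fin 6) : hexVec (k + 1) / hexVec k =
    ![1 + Complex.I, (1 + Complex.I) / 2, Complex.I,
      1 + Complex.I, (1 + Complex.I) / 2, Complex.I] k := by
  rw [div_eq_iff (hexVec_ne_zero k)]
  fin_cases k <;> simp [hexVec, Complex.ext_iff] <;> norm_num

theorem hexVec_succ_div_im_pos (k : Fin 6) : 0 < (hexVec (k + 1) / hexVec k).im := by
  rw [hexVec_succ_div]
  fin_cases k <;> simp

theorem sum_arg_hexVec : ∑ k, (hexVec (k + 1) / hexVec k).arg = 2 * π := by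
  have hdiag : (1 + Complex.I).arg = π / 4 := by
    rw [arg_eq_arctan_of_re_pos (by simp)]
    simp
  have hdiag' : ((1 + Complex.I) / 2).arg = π / 4 := by
    rw [arg_eq_arctan_of_re_pos (by simp)]
    simp
  simp only [hexVec_succ_div, Fin.sum_univ_six, Matrix.cons_val, hdiag, hdiag', Complex.arg_I]
  ring

theorem sum_turnAngle_of_inner_eq {a : Fin 6 → ℂ} (hne : ∀ k, ⟪hexVec k, a k⟫ ≠ 0)
    (hcont : ∀ k, ⟪hexVec (k + 1), a k⟫ = ⟪hexVec (k + 1), a (k + 1)⟫) :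
    ∑ k, turnAngle (a k) (a (k + 1)) = 2 * π - π * (Finset.univ.filter fun k =>
      decide (⟪hexVec k, a k⟫ < 0) ≠ decide (⟪hexVec (k + 1), a (k + 1)⟫ < 0)).card := by
  set c : Fin 6 → ℂ := fun k => if ⟪hexVec k, a k⟫ < 0 then -hexVec k else hexVec k with hc
  have hpos : ∀ k x, ⟪hexVec k, x⟫ = ⟪hexVec k, a k⟫ → 0 < (x / c k).re := by
    intro k x hx
    rw [re_div_pos_iff_inner_pos, hc]
    dsimp only
    split_ifs with hlt
    · rw [inner_neg_left, hx]
      exact neg_pos.2 hlt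
    · rw [hx]
      exact (not_lt.1 hlt).lt_of_ne' (hne k)
  have harg : ∀ k, (c (k + 1) / c k).arg = (hexVec (k + 1) / hexVec k).arg -
      π * if decide (⟪hexVec k, a k⟫ < 0) ≠ decide (⟪hexVec (k + 1), a (k + 1)⟫ < 0)
        then 1 else 0 := by
    intro k
    have hneg := Complex.arg_neg_eq_arg_sub_pi_of_im_pos (hexVec_succ_div_im_pos k)
    by_cases hk : ⟪hexVec k, a k⟫ < 0 <;> by_cases hk' : ⟪hexVec (k + 1), a (k + 1)⟫ < 0 <;>
      simp only [hc, hk, hk', if_true, if_false, decide_true, decide_false, ne_eq,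
        not_true_eq_false, not_false_eq_true, Bool.true_eq_false, Bool.false_eq_true, neg_div,
        div_neg, neg_neg, hneg, mul_one, mul_zero, sub_zero]
  rw [sum_turnAngle_eq_sum_arg (fun k => hpos k _ rfl) fun k => hpos (k + 1) _ (hcont k)]
  simp only [harg, Finset.sum_sub_distrib, sum_arg_hexVec, ← Finset.mul_sum, Finset.sum_boole]

/-- The values at the six triangles around `v`, in cyclic order, of data `L` on the lower triangles
`w, w + (1, 0), w + (1, 1)` and `U` on the upper triangles `w, w + (1, 1), w + (0, 1)`. -/
def aroundVertex (L U : ℤ × ℤ → ℂ) (v : ℤ × ℤ) : Fin 6 → ℂ :=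
  ![L v, U v, L (v + hexDir 3), U (v + hexDir 4), L (v + hexDir 4), U (v + hexDir 5)]

/-- The total turning around `v` of a vector field constant on the triangles of the lattice. -/
def vertexTurn (L U : ℤ × ℤ → ℂ) (v : ℤ × ℤ) : ℝ :=
  ∑ k, turnAngle (aroundVertex L U v k) (aroundVertex L U v (k + 1))

theorem vertexTurn_eq_zero {L U : ℤ × ℤ → ℂ} {v : ℤ × ℤ} {c : ℂ}
    (h : ∀ k, 0 < (aroundVertex L U v k / c).re) : vertexTurn L U v = 0 := by
  rw [vertexTurn, sum_turnAngle_eq_sum_arg (c := fun _ => c) h h]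
  have hc : c ≠ 0 := (div_ne_zero_iff.1 (ne_zero_of_re_pos (h 0))).2
  simp only [div_self hc, Complex.arg_one, Finset.sum_const_zero]

/-- The gradient, on the lower triangle at `v`, of the piecewise linear interpolation of `F` on the
grid of mesh `h`. -/
def lowerGradient (F : ℤ × ℤ → ℝ) (h : ℝ) (v : ℤ × ℤ) : ℂ :=
  ⟨(F (v + hexDir 0) - F v) / h, (F (v + hexDir 1) - F (v + hexDir 0)) / h⟩

/-- The gradient, on the upper triangle at `v`, of the piecewise linear interpolation of `F` on the
grid of mesh `h`. -/
def upperGradient (F : ℤ × ℤ → ℝ) (h : ℝ) (v : ℤ × ℤ) : ℂ :=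
  ⟨(F (v + hexDir 1) - F (v + hexDir 2)) / h, (F (v + hexDir 2) - F v) / h⟩

theorem inner_hexVec_aroundVertex (F : ℤ × ℤ → ℝ) (h : ℝ) (v : ℤ × ℤ) (k : Fin 6) :
    ⟪hexVec k, aroundVertex (lowerGradient F h) (upperGradient F h) v k⟫ =
      (F (v + hexDir k) - F v) / h := by
  obtain ⟨i, j⟩ := v
  fin_cases k <;>
    simp [aroundVertex, lowerGradient, upperGradient, hexVec, hexDir, Complex.inner] <;> ring

theorem inner_hexVec_succ_aroundVertex (F : ℤ × ℤ → ℝ) (h : ℝ) (v : ℤ × ℤ) (k : Fin 6) :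
    ⟪hexVec (k + 1), aroundVertex (lowerGradient F h) (upperGradient F h) v k⟫ =
      (F (v + hexDir (k + 1)) - F v) / h := by
  obtain ⟨i, j⟩ := v
  fin_cases k <;>
    simp [aroundVertex, lowerGradient, upperGradient, hexVec, hexDir, Complex.inner] <;> ring

theorem two_mul_discreteIndex {α : Type*} [LinearOrder α] (key : ℤ × ℤ → α) (v : ℤ × ℤ) :
    2 * discreteIndex key v = 2 - (Finset.univ.filter fun k : Fin 6 =>
      decide (key (v + hexDir k) < key v) ≠ decide (key (v + hexDir (k + 1)) < key v)).card := by
  have hcount : ∀ b : Fin 6 → Bool, 2 * (1 - ((Finset.univ.filter fun k => b k = true).card : ℤ) +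
      (Finset.univ.filter fun k => b k = true ∧ b (k + 1) = true).card) =
        2 - (Finset.univ.filter fun k => b k ≠ b (k + 1)).card := by decide
  simpa only [discreteIndex, decide_eq_true_eq] using
    hcount fun k => decide (key (v + hexDir k) < key v)

theorem vertexTurn_gradient {F : ℤ × ℤ → ℝ} {h : ℝ} (hh : 0 < h) {v : ℤ × ℤ}
    (hne : ∀ k, F (v + hexDir k) ≠ F v) :
    vertexTurn (lowerGradient F h) (upperGradient F h) v = 2 * π * discreteIndex F v := by
  have hsign : ∀ k, (F (v + hexDir k) - F v) / h < 0 ↔ F (v + hexDir k) < F v := fun k => by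
    rw [div_lt_iff₀ hh, zero_mul, sub_neg]
  have hindex := congrArg (Int.cast : ℤ → ℝ) (two_mul_discreteIndex F v)
  push_cast at hindex
  rw [vertexTurn, sum_turnAngle_of_inner_eq
    (fun k => by
      rw [inner_hexVec_aroundVertex]
      exact div_ne_zero (sub_ne_zero.2 (hne k)) hh.ne')
    fun k => by rw [inner_hexVec_succ_aroundVertex, inner_hexVec_aroundVertex]]
  simp only [inner_hexVec_aroundVertex, hsign]
  linear_combination -π * hindex

/-- The turning from `U` at `(i, j - 1)` through `L` to `U` at `(i, j)`. -/
def columnTurn (L U : ℤ × ℤ → ℂ) (i j : ℤ) : ℝ :=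
  turnAngle (U (i, j - 1)) (L (i, j)) + turnAngle (L (i, j)) (U (i, j))

/-- The turning from `U` at `(i, j)` through `L` to `U` at `(i - 1, j)`. -/
def rowTurn (L U : ℤ × ℤ → ℂ) (i j : ℤ) : ℝ :=
  turnAngle (U (i, j)) (L (i - 1, j)) + turnAngle (L (i - 1, j)) (U (i - 1, j))

theorem vertexTurn_eq (L U : ℤ × ℤ → ℂ) (i j : ℤ) : vertexTurn L U (i, j) =
    (columnTurn L U i j - columnTurn L U (i - 1) j) +
      (rowTurn L U i j - rowTurn L U i (j - 1)) := by
  simp only [vertexTurn, Fin.sum_univ_six]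
  simp only [aroundVertex, hexDir, columnTurn, rowTurn]
  have h1 := turnAngle_swap (L (i - 1, j)) (U (i - 1, j - 1))
  have h2 := turnAngle_swap (U (i - 1, j - 1)) (L (i - 1, j - 1))
  have h3 := turnAngle_swap (L (i - 1, j - 1)) (U (i, j - 1))
  simp [← sub_eq_add_neg]
  linear_combination h1 + h2 + h3

theorem sum_Ioc_sub_sub_one (f : ℤ → ℝ) {a b : ℤ} (hab : a ≤ b) :
    ∑ i ∈ Finset.Ioc a b, (f i - f (i - 1)) = f b - f a := by
  induction b, hab using Int.leInduction with
  | base => rw [Finset.Ioc_self, Finset.sum_empty, sub_self]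
  | succ b hab ih =>
    rw [← Order.succ_eq_add_one, ← Finset.insert_Ioc_right_eq_Ioc_succ hab,
      Finset.sum_insert (by simp), ih, Order.succ_eq_add_one, add_sub_cancel_right]
    ring

theorem sum_vertexTurn_box (L U : ℤ × ℤ → ℂ) {a b : ℤ} (hab : a ≤ b) :
    ∑ v ∈ Finset.Ioc a b ×ˢ Finset.Ioc a b, vertexTurn L U v =
      ∑ j ∈ Finset.Ioc a b, (columnTurn L U b j - columnTurn L U a j) +
      ∑ i ∈ Finset.Ioc a b, (rowTurn L U i b - rowTurn L U i a) := by
  rw [Finset.sum_congr rfl fun (v : ℤ × ℤ) _ => vertexTurn_eq L U v.1 v.2, Finset.sum_add_distrib]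
  congr 1
  · rw [Finset.sum_product_right]
    exact Finset.sum_congr rfl fun j _ => sum_Ioc_sub_sub_one (columnTurn L U · j) hab
  · rw [Finset.sum_product]
    exact Finset.sum_congr rfl fun i _ => sum_Ioc_sub_sub_one (rowTurn L U i) hab

end Turning

section Cluster

theorem HexRegular.mono {α β : Type*} [LinearOrder α] [LinearOrder β] {f : ℤ × ℤ → α}
    {g : ℤ × ℤ → β} {v : ℤ × ℤ} (h : HexRegular f v) (hlt : ∀ w, f v < f w → g v < g w)
    (hgt : ∀ w, f w < f v → g w < g v) : HexRegular g v := by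
  obtain ⟨k, h0, h1, h3, h4⟩ := h
  exact ⟨k, hlt _ h0, hlt _ h1, hgt _ h3, hgt _ h4⟩

theorem hexVec_add_three (k : Fin 6) : hexVec (k + 3) = -hexVec k := by
  simp only [hexVec_eq, hexDir_add_three, Prod.fst_neg, Prod.snd_neg, Int.cast_neg]
  rfl

theorem inner_hexVec (k : Fin 6) (z : ℂ) :
    ⟪hexVec k, z⟫ = (hexDir k).1 * z.re + (hexDir k).2 * z.im := by
  simp [hexVec_eq, Complex.inner, mul_comm]

theorem exists_lt_inner_hexVec {z : ℂ} {δ : ℝ} (hδ : 0 ≤ δ) (hz : 4 * δ < ‖z‖) :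
    ∃ k, δ < ⟪hexVec k, z⟫ ∧ δ < ⟪hexVec (k + 1), z⟫ := by
  have habs := hz.trans_le (Complex.norm_le_abs_re_add_abs_im z)
  obtain ⟨p, q⟩ := z
  have hsector : (δ < p ∧ δ < p + q) ∨ (δ < p + q ∧ δ < q) ∨ (δ < q ∧ δ < -p) ∨
      (δ < -p ∧ δ < -p - q) ∨ (δ < -p - q ∧ δ < -q) ∨ (δ < -q ∧ δ < p) := by
    rcases abs_cases p with ⟨hp, hp'⟩ | ⟨hp, hp'⟩ <;>
      rcases abs_cases q with ⟨hq, hq'⟩ | ⟨hq, hq'⟩ <;> rw [hp, hq] at habs <;> grind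
  simp only [inner_hexVec, Fin.exists_fin_succ, Fin.exists_fin_zero, hexDir]
  simpa [hexDir, ← sub_eq_add_neg] using hsector

theorem hexRegular_of_abs_sub_inner_le {F : ℤ × ℤ → ℝ} {v : ℤ × ℤ} {z : ℂ} {δ : ℝ}
    (hF : ∀ k, |F (v + hexDir k) - F v - ⟪hexVec k, z⟫| ≤ δ) (hz : 4 * δ < ‖z‖) :
    HexRegular F v := by
  obtain ⟨k, h0, h1⟩ := exists_lt_inner_hexVec ((abs_nonneg _).trans (hF 0)) hz
  have hup : ∀ l, δ < ⟪hexVec l, z⟫ → F v < F (v + hexDir l) := fun l hl => by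
    linarith [(abs_le.1 (hF l)).1]
  have hdown : ∀ l, δ < ⟪hexVec l, z⟫ → F (v + hexDir (l + 3)) < F v := fun l hl => by
    have hle := (abs_le.1 (hF (l + 3))).2
    rw [hexVec_add_three, inner_neg_left] at hle
    linarith
  exact ⟨k, hup k h0, hup (k + 1) h1, hdown k h0, by
    rw [show k + 4 = k + 1 + 3 from (add_assoc k 1 3).symm]
    exact hdown (k + 1) h1⟩

/-- The `τ` for which `F w = τ * χ w`, that is, the member through `w` of the pencil of level sets
of `F - τ * χ`; where `χ` vanishes it is replaced by `±η`, according to the sign of `F`. -/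
def pencilLevel (F χ : ℤ × ℤ → ℝ) (η : ℝ) (w : ℤ × ℤ) : ℝ :=
  if 0 < χ w then F w / χ w else if F w ≤ 0 then -η else η

variable {F χ : ℤ × ℤ → ℝ} {η : ℝ}

theorem pencilLevel_lt {τ : ℝ} (hχ : ∀ w, 0 ≤ χ w) (hτ : -η < τ) {w : ℤ × ℤ}
    (h : F w - τ * χ w < 0) : pencilLevel F χ η w < τ := by
  unfold pencilLevel
  split_ifs with hpos hF
  · rwa [div_lt_iff₀ hpos, ← sub_neg]
  · exact hτ
  · rw [le_antisymm (not_lt.1 hpos) (hχ w), mul_zero, sub_zero] at h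
    exact absurd h.le hF

theorem lt_pencilLevel {τ : ℝ} (hχ : ∀ w, 0 ≤ χ w) (hτ : τ < η) {w : ℤ × ℤ}
    (h : 0 < F w - τ * χ w) : τ < pencilLevel F χ η w := by
  unfold pencilLevel
  split_ifs with hpos hF
  · rwa [lt_div_iff₀ hpos, ← sub_pos]
  · rw [le_antisymm (not_lt.1 hpos) (hχ w), mul_zero, sub_zero] at h
    exact absurd hF h.not_ge
  · exact hτ

theorem pencilLevel_eq (hη : 0 < η) {w : ℤ × ℤ} (h : |pencilLevel F χ η w| < η) :
    0 < χ w ∧ F w = pencilLevel F χ η w * χ w := by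
  unfold pencilLevel at h ⊢
  split_ifs at h ⊢ with hpos hF
  · exact ⟨hpos, (div_mul_cancel₀ _ hpos.ne').symm⟩
  · exact absurd h (by rw [abs_neg, abs_of_pos hη]; exact lt_irrefl η)
  · exact absurd h (by rw [abs_of_pos hη]; exact lt_irrefl η)

theorem pencilLevel_of_eq_one {w : ℤ × ℤ} (h : χ w = 1) : pencilLevel F χ η w = F w := by
  rw [pencilLevel, h, if_pos one_pos, div_one]

/-- The order of the vertices by `pencilLevel`, with ties broken lexicographically. -/
def pencilKey (F χ : ℤ × ℤ → ℝ) (η : ℝ) (w : ℤ × ℤ) : ℝ ×ₗ (ℤ ×ₗ ℤ) :=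
  toLex (pencilLevel F χ η w, toLex w)

theorem pencilKey_injective : Function.Injective (pencilKey F χ η) := fun _ _ h =>
  toLex.injective (congrArg Prod.snd (toLex.injective h))

theorem pencilKey_lt {v w : ℤ × ℤ} (h : pencilLevel F χ η v < pencilLevel F χ η w) :
    pencilKey F χ η v < pencilKey F χ η w :=
  Prod.Lex.toLex_lt_toLex.2 (Or.inl h)

theorem pencilLevel_le_of_pencilKey_le {v w : ℤ × ℤ} (h : pencilKey F χ η v ≤ pencilKey F χ η w) :
    pencilLevel F χ η v ≤ pencilLevel F χ η w :=
  not_lt.1 fun hlt => (pencilKey_lt hlt).not_ge h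

theorem hexRegular_pencilKey (hχ : ∀ w, 0 ≤ χ w) {v : ℤ × ℤ} (hv : |pencilLevel F χ η v| < η)
    (hzero : F v - pencilLevel F χ η v * χ v = 0)
    (h : HexRegular (fun w => F w - pencilLevel F χ η v * χ w) v) :
    HexRegular (pencilKey F χ η) v := by
  obtain ⟨hlower, hupper⟩ := abs_lt.1 hv
  refine h.mono (fun w hw => pencilKey_lt (lt_pencilLevel hχ hupper ?_))
    fun w hw => pencilKey_lt (pencilLevel_lt hχ hlower ?_)
  · rwa [hzero] at hw
  · rwa [hzero] at hw

theorem discreteIndex_pencilKey {v : ℤ × ℤ} (hone : χ v = 1)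
    (hone' : ∀ k, χ (v + hexDir k) = 1) (hne : ∀ k, F (v + hexDir k) ≠ F v) :
    discreteIndex (pencilKey F χ η) v = discreteIndex F v := by
  have hiff : ∀ k, pencilKey F χ η (v + hexDir k) < pencilKey F χ η v ↔ F (v + hexDir k) < F v := by
    intro k
    have hlevel : pencilLevel F χ η (v + hexDir k) = F (v + hexDir k) :=
      pencilLevel_of_eq_one (hone' k)
    have hlevel' : pencilLevel F χ η v = F v := pencilLevel_of_eq_one hone
    rcases (hne k).lt_or_gt with h | h
    · exact iff_of_true (pencilKey_lt (by rwa [hlevel, hlevel'])) h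
    · exact iff_of_false (pencilKey_lt (by rwa [hlevel, hlevel'])).not_gt h.not_gt
  simp only [discreteIndex, hiff]

theorem sum_discreteIndex_le_one_of_pencil (hχ : ∀ w, 0 ≤ χ w) (hfin : {w | 0 < χ w}.Finite)
    {C : Finset (ℤ × ℤ)} (hone : ∀ v ∈ C, χ v = 1) (hone' : ∀ v ∈ C, ∀ k, χ (v + hexDir k) = 1)
    (hne : ∀ v ∈ C, ∀ k, F (v + hexDir k) ≠ F v) (hη : 0 < η) (hlt : ∀ v ∈ C, |F v| < η)
    (hreg : ∀ v, v ∉ C → 0 < χ v → ∀ τ, |τ| < η → F v = τ * χ v →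
      HexRegular (fun w => F w - τ * χ w) v)
    {c₀ : ℤ × ℤ} (hconn : ∀ v ∈ C, Relation.ReflTransGen (HexStep C) c₀ v) :
    ∑ v ∈ C, discreteIndex F v ≤ 1 := by
  classical
  set M := hfin.toFinset.filter fun w => |pencilLevel F χ η w| < η with hM
  have hmem : ∀ w, w ∈ M ↔ |pencilLevel F χ η w| < η := fun w => by
    rw [hM, Finset.mem_filter, Set.Finite.mem_toFinset]
    exact and_iff_right_of_imp fun h => (pencilLevel_eq hη h).1
  have hconvex : OrderConvex (pencilKey F χ η) M := fun x hx z hz y hxy hyz => by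
    rw [hmem] at hx hz ⊢
    exact abs_lt.2 ⟨(abs_lt.1 hx).1.trans_le (pencilLevel_le_of_pencilKey_le hxy),
      (pencilLevel_le_of_pencilKey_le hyz).trans_lt (abs_lt.1 hz).2⟩
  have hCM : C ⊆ M := fun v hv => by
    rw [hmem, pencilLevel_of_eq_one (hone v hv)]
    exact hlt v hv
  have hregular : ∀ v ∈ M, v ∉ C → HexRegular (pencilKey F χ η) v := fun v hv hvC => by
    rw [hmem] at hv
    obtain ⟨hpos, heq⟩ := pencilLevel_eq hη hv
    exact hexRegular_pencilKey hχ hv (sub_eq_zero.2 heq) (hreg v hvC hpos _ hv heq)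
  rw [← Finset.sum_congr rfl fun v hv =>
    discreteIndex_pencilKey (η := η) (hone v hv) (hone' v hv) (hne v hv)]
  exact hconvex.sum_discreteIndex_le_one_of_hexRegular pencilKey_injective hCM hconn hregular

theorem discreteIndex_sub_const (F : ℤ × ℤ → ℝ) (c : ℝ) (v : ℤ × ℤ) :
    discreteIndex (fun w => F w - c) v = discreteIndex F v := by
  simp only [discreteIndex, sub_lt_sub_iff_right]

theorem reflTransGen_hexStep_Icc {a b c d : ℤ} {v : ℤ × ℤ}
    (hv : v ∈ Finset.Icc a b ×ˢ Finset.Icc c d) :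
    Relation.ReflTransGen (HexStep (Finset.Icc a b ×ˢ Finset.Icc c d)) (a, c) v := by
  obtain ⟨x, y⟩ := v
  obtain ⟨⟨hax, hxb⟩, hcy, hyd⟩ : (a ≤ x ∧ x ≤ b) ∧ c ≤ y ∧ y ≤ d := by
    simpa only [Finset.mem_product, Finset.mem_Icc] using hv
  have hmem : ∀ x' y', a ≤ x' → x' ≤ x → c ≤ y' → y' ≤ y →
      (x', y') ∈ Finset.Icc a b ×ˢ Finset.Icc c d := fun x' y' h1 h2 h3 h4 => by
    simp only [Finset.mem_product, Finset.mem_Icc]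
    omega
  have hrow : Relation.ReflTransGen (HexStep (Finset.Icc a b ×ˢ Finset.Icc c d)) (a, c) (x, c) := by
    clear hv
    induction x, hax using Int.leInduction with
    | base => exact .refl
    | succ x hax ih =>
      refine (ih (by omega) fun x' y' h1 h2 => hmem x' y' h1 (by omega)).tail
        ⟨hmem _ _ hax (by omega) le_rfl hcy, hmem _ _ (by omega) le_rfl le_rfl hcy, 0, ?_⟩
      simp [hexDir]
  refine hrow.trans ?_
  clear hv hrow
  induction y, hcy using Int.leInduction with
  | base => exact .refl
  | succ y hcy ih =>
    refine (ih (by omega) fun x' y' h1 h2 h3 h4 => hmem x' y' h1 h2 h3 (by omega)).tail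
      ⟨hmem _ _ hax le_rfl hcy (by omega), hmem _ _ hax le_rfl (by omega) le_rfl, 2, ?_⟩
    simp [hexDir]

end Cluster

section Grid

open scoped Real Gradient Topology

/-- The point of the square grid of mesh `h` with integer coordinates `v`. -/
def gridPoint (h : ℝ) (v : ℤ × ℤ) : ℂ := ⟨h * v.1, h * v.2⟩

theorem gridPoint_zero (h : ℝ) : gridPoint h 0 = 0 := by
  apply Complex.ext <;> simp [gridPoint]

theorem gridPoint_add_hexDir (h : ℝ) (v : ℤ × ℤ) (k : Fin 6) :
    gridPoint h (v + hexDir k) = gridPoint h v + h • hexVec k := by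
  rw [hexVec_eq]
  apply Complex.ext <;> simp [gridPoint, mul_add]

theorem norm_hexVec_le (k : Fin 6) : ‖hexVec k‖ ≤ 2 := by
  refine (Complex.norm_le_abs_re_add_abs_im _).trans ?_
  fin_cases k <;> simp [hexVec] <;> norm_num

theorem norm_gridPoint_add_hexDir_sub_le {h : ℝ} (hh : 0 ≤ h) (v : ℤ × ℤ) (k : Fin 6) :
    ‖gridPoint h (v + hexDir k) - gridPoint h v‖ ≤ 2 * h := by
  rw [gridPoint_add_hexDir, add_sub_cancel_left, norm_smul, Real.norm_of_nonneg hh, mul_comm]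
  gcongr
  exact norm_hexVec_le k

theorem norm_gridPoint_add_hexDir_sub_le_add {h : ℝ} (hh : 0 ≤ h) (p : ℂ) (v : ℤ × ℤ)
    (k : Fin 6) : ‖gridPoint h (v + hexDir k) - p‖ ≤ ‖gridPoint h v - p‖ + 2 * h := by
  linarith [norm_sub_le_norm_sub_add_norm_sub (gridPoint h (v + hexDir k)) (gridPoint h v) p,
    norm_gridPoint_add_hexDir_sub_le hh v k]

theorem norm_le_of_abs_inner_hexVec_le {z : ℂ} {e : ℝ} {k : Fin 6} (h : |⟪hexVec k, z⟫| ≤ e)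
    (h' : |⟪hexVec (k + 1), z⟫| ≤ e) : ‖z‖ ≤ 3 * e := by
  refine (Complex.norm_le_abs_re_add_abs_im z).trans ?_
  rw [inner_hexVec, abs_le] at h h'
  rcases abs_cases z.re with ⟨hre, -⟩ | ⟨hre, -⟩ <;>
    rcases abs_cases z.im with ⟨him, -⟩ | ⟨him, -⟩ <;> rw [hre, him] <;>
    fin_cases k <;> simp [hexDir] at h h' <;> linarith

/-- `F` is an approximation of `u` on the part of the grid of mesh `h` in the unit disk, to first
order with relative error `e`, taking distinct values at adjacent vertices. -/
structure GridApprox (u : ℂ → ℝ) (F : ℤ × ℤ → ℝ) (h e : ℝ) : Prop where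
  mesh_pos : 0 < h
  abs_value_sub_le : ∀ v, ‖gridPoint h v‖ < 1 → |F v - u (gridPoint h v)| ≤ e
  abs_increment_sub_le : ∀ v, ‖gridPoint h v‖ < 1 → ∀ k,
    |F (v + hexDir k) - F v - h * ⟪hexVec k, ∇ u (gridPoint h v)⟫| ≤ e * h
  ne : ∀ v k, F (v + hexDir k) ≠ F v

variable {u : ℂ → ℝ} {F : ℤ × ℤ → ℝ} {h e : ℝ}

theorem GridApprox.error_nonneg (hF : GridApprox u F h e) : 0 ≤ e :=
  (abs_nonneg _).trans (hF.abs_value_sub_le 0 (by rw [gridPoint_zero, norm_zero]; exact one_pos))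

theorem GridApprox.norm_aroundVertex_sub_le (hF : GridApprox u F h e) {v : ℤ × ℤ}
    (hv : ‖gridPoint h v‖ < 1) (k : Fin 6) :
    ‖aroundVertex (lowerGradient F h) (upperGradient F h) v k - ∇ u (gridPoint h v)‖ ≤ 3 * e := by
  have hquot : ∀ l, |(F (v + hexDir l) - F v) / h - ⟪hexVec l, ∇ u (gridPoint h v)⟫| ≤ e := by
    intro l
    rw [div_sub' hF.mesh_pos.ne', abs_div, abs_of_pos hF.mesh_pos, div_le_iff₀ hF.mesh_pos]
    exact hF.abs_increment_sub_le v hv l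
  apply norm_le_of_abs_inner_hexVec_le (k := k)
  · rw [inner_sub_right, inner_hexVec_aroundVertex]
    exact hquot k
  · rw [inner_sub_right, inner_hexVec_succ_aroundVertex]
    exact hquot (k + 1)

theorem GridApprox.hexRegular_sub_mul (hF : GridApprox u F h e) {χ : ℤ × ℤ → ℝ} {τ δ : ℝ}
    {v : ℤ × ℤ} (hv : ‖gridPoint h v‖ < 1) (hχ : ∀ k, |τ * (χ (v + hexDir k) - χ v)| ≤ δ * h)
    (hgrad : 4 * (e + δ) < ‖∇ u (gridPoint h v)‖) : HexRegular (fun w => F w - τ * χ w) v := by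
  have hh := hF.mesh_pos
  apply hexRegular_of_abs_sub_inner_le (z := h • ∇ u (gridPoint h v)) (δ := (e + δ) * h)
  · intro k
    rw [real_inner_smul_right]
    calc _ = |(F (v + hexDir k) - F v - h * ⟪hexVec k, ∇ u (gridPoint h v)⟫) -
          τ * (χ (v + hexDir k) - χ v)| := by ring_nf
      _ ≤ e * h + δ * h := (abs_sub _ _).trans (add_le_add (hF.abs_increment_sub_le v hv k) (hχ k))
      _ = (e + δ) * h := (add_mul _ _ _).symm
  · rw [norm_smul, Real.norm_of_nonneg hh.le, mul_comm h, ← mul_assoc]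
    exact mul_lt_mul_of_pos_right hgrad hh

/-- A Lipschitz cutoff function, equal to `1` within distance `ρ` of `p` and supported within
distance `2 * ρ`. -/
def radialCutoff (p : ℂ) (ρ : ℝ) (z : ℂ) : ℝ := max 0 (min 1 (2 - ‖z - p‖ / ρ))

theorem radialCutoff_eq_one {p z : ℂ} {ρ : ℝ} (hρ : 0 < ρ) (hz : ‖z - p‖ ≤ ρ) :
    radialCutoff p ρ z = 1 := by
  have hdiv : ‖z - p‖ / ρ ≤ 1 := (div_le_one hρ).2 hz
  rw [radialCutoff, min_eq_left (by linarith), max_eq_right zero_le_one]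

theorem norm_sub_lt_of_radialCutoff_pos {p z : ℂ} {ρ : ℝ} (hρ : 0 < ρ)
    (hz : 0 < radialCutoff p ρ z) : ‖z - p‖ < 2 * ρ := by
  have hpos := (lt_min_iff.1 ((lt_max_iff.1 hz).resolve_left (lt_irrefl 0))).2
  exact (div_lt_iff₀ hρ).1 (sub_pos.1 hpos)

theorem abs_radialCutoff_sub_le {ρ : ℝ} (hρ : 0 < ρ) (p z w : ℂ) :
    |radialCutoff p ρ z - radialCutoff p ρ w| ≤ ‖z - w‖ / ρ := by
  have hclip : |radialCutoff p ρ z - radialCutoff p ρ w| ≤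
      |(2 - ‖z - p‖ / ρ) - (2 - ‖w - p‖ / ρ)| := by
    refine (abs_max_sub_max_le_max _ _ _ _).trans (max_le (by simp) ?_)
    exact (abs_min_sub_min_le_max _ _ _ _).trans (max_le (by simp) le_rfl)
  refine hclip.trans ?_
  rw [sub_sub_sub_cancel_left, ← sub_div, abs_div, abs_of_pos hρ, norm_sub_rev z w,
    ← sub_sub_sub_cancel_right w z p]
  gcongr
  exact abs_norm_sub_norm_le _ _

theorem GridApprox.hexRegular_sub_mul_radialCutoff (hF : GridApprox u F h e) {p : ℂ}
    {ρ η τ : ℝ} (hp : ‖p‖ + 2 * ρ < 1) (hhρ : 4 * h ≤ ρ) (hτ : |τ| < η) {v : ℤ × ℤ}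
    (hv : ‖gridPoint h v - p‖ < 2 * ρ) (hgrad : 4 * e < ‖∇ u (gridPoint h v)‖)
    (hgrad' : ρ / 2 ≤ ‖gridPoint h v - p‖ → 4 * (e + η * (2 / ρ)) < ‖∇ u (gridPoint h v)‖) :
    HexRegular (fun w => F w - τ * radialCutoff p ρ (gridPoint h w)) v := by
  have hh := hF.mesh_pos
  have hρ : 0 < ρ := by linarith
  have hη : 0 < η := (abs_nonneg τ).trans_lt hτ
  have hdisk : ‖gridPoint h v‖ < 1 := by
    linarith [norm_le_norm_add_norm_sub' (gridPoint h v) p]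
  rcases le_or_gt (ρ / 2) ‖gridPoint h v - p‖ with hfar | hnear
  · refine hF.hexRegular_sub_mul hdisk (fun k => ?_) (hgrad' hfar)
    have hlip : |radialCutoff p ρ (gridPoint h (v + hexDir k)) -
        radialCutoff p ρ (gridPoint h v)| ≤ 2 * h / ρ := by
      refine (abs_radialCutoff_sub_le hρ _ _ _).trans ?_
      gcongr
      exact norm_gridPoint_add_hexDir_sub_le hh.le v k
    rw [abs_mul, mul_assoc, div_mul_eq_mul_div]
    exact mul_le_mul hτ.le hlip (abs_nonneg _) hη.le
  · refine hF.hexRegular_sub_mul (δ := 0) hdisk (fun k => ?_) (by rwa [add_zero])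
    have hnear' := norm_gridPoint_add_hexDir_sub_le_add hh.le p v k
    rw [radialCutoff_eq_one hρ (by linarith), radialCutoff_eq_one hρ (by linarith), sub_self,
      mul_zero, abs_zero, zero_mul]

/-- The vertices whose grid points lie in the square of half-side `r` centred at `p`. -/
def gridSquare (h r : ℝ) (p : ℂ) : Finset (ℤ × ℤ) :=
  Finset.Icc ⌈(p.re - r) / h⌉ ⌊(p.re + r) / h⌋ ×ˢ Finset.Icc ⌈(p.im - r) / h⌉ ⌊(p.im + r) / h⌋

theorem mem_gridSquare (hh : 0 < h) {r : ℝ} {p : ℂ} {v : ℤ × ℤ} : v ∈ gridSquare h r p ↔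
    |(gridPoint h v - p).re| ≤ r ∧ |(gridPoint h v - p).im| ≤ r := by
  simp only [gridSquare, Finset.mem_product, Finset.mem_Icc, Int.ceil_le, Int.le_floor,
    div_le_iff₀ hh, le_div_iff₀ hh, abs_sub_le_iff, gridPoint, Complex.sub_re, Complex.sub_im,
    mul_comm h]
  constructor <;> rintro ⟨⟨_, _⟩, _, _⟩ <;> refine ⟨⟨?_, ?_⟩, ?_, ?_⟩ <;> linarith

theorem norm_sub_le_of_mem_gridSquare (hh : 0 < h) {r : ℝ} {p : ℂ} {v : ℤ × ℤ}
    (hv : v ∈ gridSquare h r p) : ‖gridPoint h v - p‖ ≤ 2 * r := by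
  rw [mem_gridSquare hh] at hv
  linarith [Complex.norm_le_abs_re_add_abs_im (gridPoint h v - p)]

theorem le_norm_sub_of_notMem_gridSquare (hh : 0 < h) {r : ℝ} {p : ℂ} {v : ℤ × ℤ}
    (hv : v ∉ gridSquare h r p) : r ≤ ‖gridPoint h v - p‖ := by
  contrapose! hv
  exact (mem_gridSquare hh).2
    ⟨(Complex.abs_re_le_norm _).trans hv.le, (Complex.abs_im_le_norm _).trans hv.le⟩

theorem GridApprox.sum_discreteIndex_gridSquare_le_one (hF : GridApprox u F h e) {p : ℂ}
    {ρ r η : ℝ} (hp : ‖p‖ + 2 * ρ < 1) (hrρ : 8 * r ≤ ρ) (hhr : 4 * h ≤ r)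
    (hη : 0 < η) (hosc : ∀ z, ‖z - p‖ ≤ 2 * r → |u z - u p| + e < η)
    (hgrad : ∀ z, r ≤ ‖z - p‖ → ‖z - p‖ < 2 * ρ → 4 * e < ‖∇ u z‖)
    (hgrad' : ∀ z, ρ / 2 ≤ ‖z - p‖ → ‖z - p‖ < 2 * ρ → 4 * (e + η * (2 / ρ)) < ‖∇ u z‖) :
    ∑ v ∈ gridSquare h r p, discreteIndex F v ≤ 1 := by
  have hh := hF.mesh_pos
  have hρ : 0 < ρ := by linarith
  have hdisk : ∀ v, ‖gridPoint h v - p‖ < 2 * ρ → ‖gridPoint h v‖ < 1 := fun v hv => by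
    linarith [norm_le_norm_add_norm_sub' (gridPoint h v) p]
  have hstep := norm_gridPoint_add_hexDir_sub_le_add hh.le p
  have hsquare := fun v => norm_sub_le_of_mem_gridSquare (h := h) hh (r := r) (p := p) (v := v)
  set χ : ℤ × ℤ → ℝ := fun w => radialCutoff p ρ (gridPoint h w)
  have hχpos : ∀ v, 0 < χ v → ‖gridPoint h v - p‖ < 2 * ρ := fun v =>
    norm_sub_lt_of_radialCutoff_pos hρ
  simp only [← discreteIndex_sub_const F (u p)]
  refine sum_discreteIndex_le_one_of_pencil (χ := χ) (η := η) (fun _ => le_max_left _ _) ?_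
    (fun v hv => radialCutoff_eq_one hρ (by linarith [hsquare v hv]))
    (fun v hv k => radialCutoff_eq_one hρ (by linarith [hsquare v hv, hstep v k]))
    (fun v _ k => sub_left_injective.ne (hF.ne v k)) hη ?_ ?_
    (fun v hv => reflTransGen_hexStep_Icc hv)
  · refine (gridSquare h (2 * ρ) p).finite_toSet.subset fun v hv => ?_
    by_contra hmem
    exact (le_norm_sub_of_notMem_gridSquare hh hmem).not_gt (hχpos v hv)
  · intro v hv
    have hvalue := hF.abs_value_sub_le v (hdisk v (by linarith [hsquare v hv]))
    linarith [abs_sub_le (F v) (u (gridPoint h v)) (u p), hosc _ (hsquare v hv)]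
  · intro v hvC hv τ hτ _
    have hreg := hF.hexRegular_sub_mul_radialCutoff hp (by linarith) hτ (hχpos v hv)
      (hgrad _ (le_norm_sub_of_notMem_gridSquare hh hvC) (hχpos v hv))
      fun hfar => hgrad' _ hfar (hχpos v hv)
    exact hreg.mono (fun w hw => by linarith) fun w hw => by linarith

/-- The continuous extension to the plane of the gradient of `u` on the closed unit disk which is
constant along rays outside of the disk. -/
def radialGradient (u : ℂ → ℝ) (z : ℂ) : ℂ := ∇ u ((max 1 ‖z‖)⁻¹ • z)

theorem radialGradient_of_norm_le_one (u : ℂ → ℝ) {z : ℂ} (hz : ‖z‖ ≤ 1) :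
    radialGradient u z = ∇ u z := by
  rw [radialGradient, max_eq_left hz, inv_one, one_smul]

theorem radialGradient_smul (u : ℂ → ℝ) {t : ℝ} {z : ℂ} (ht : 1 ≤ t) (hz : ‖z‖ = 1) :
    radialGradient u (t • z) = ∇ u z := by
  rw [radialGradient, norm_smul, hz, mul_one, Real.norm_of_nonneg (zero_le_one.trans ht),
    max_eq_right ht, inv_smul_smul₀ (zero_lt_one.trans_le ht).ne']

theorem radialGradient_eq_of_one_le_norm (u : ℂ → ℝ) {z : ℂ} (hz : 1 ≤ ‖z‖) :
    radialGradient u z = ∇ u (‖z‖⁻¹ • z) := by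
  rw [radialGradient, max_eq_right hz]

theorem continuous_gradient (hu : ContDiff ℝ 1 u) : Continuous (∇ u) :=
  (InnerProductSpace.toDual ℝ ℂ).symm.continuous.comp (hu.continuous_fderiv one_ne_zero)

theorem continuous_radialGradient (hu : ContDiff ℝ 1 u) : Continuous (radialGradient u) := by
  refine (continuous_gradient hu).comp
    (((continuous_const.max continuous_norm).inv₀ fun z => ?_).smul continuous_id)
  exact (zero_lt_one.trans_le (le_max_left 1 ‖z‖)).ne'

theorem exists_forall_le_norm_radialGradient (hu : ContDiff ℝ 1 u) {S : Set ℂ}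
    (hS : ∀ p ∈ S, ‖p‖ < 1) (hzero : ∀ z, ‖z‖ ≤ 1 → ∇ u z = 0 → z ∈ S) {r : ℝ} (hr : 0 < r) :
    ∃ g > 0, ∀ z, ‖z‖ ≤ 2 → (∀ p ∈ S, r ≤ ‖z - p‖) → g ≤ ‖radialGradient u z‖ := by
  have hclosed : IsClosed {z : ℂ | ∀ p ∈ S, r ≤ ‖z - p‖} := by
    simp only [Set.ofPred_forall]
    exact isClosed_biInter fun p _ =>
      isClosed_le continuous_const (continuous_id.sub continuous_const).norm
  obtain ⟨g, hg, hbound⟩ := ((isCompact_closedBall (0 : ℂ) 2).inter_right hclosed).exists_forall_le'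
    (continuous_radialGradient hu).norm.continuousOn (a := 0) fun z hz => by
      refine norm_pos_iff.2 fun h0 => ?_
      rcases le_or_gt ‖z‖ 1 with hz1 | hz1
      · rw [radialGradient_of_norm_le_one u hz1] at h0
        have hfar := hz.2 z (hzero z hz1 h0)
        rw [sub_self, norm_zero] at hfar
        exact hr.not_ge hfar
      · rw [radialGradient_eq_of_one_le_norm u hz1.le] at h0
        have hnorm := norm_smul_inv_norm (𝕜 := ℝ) (norm_pos_iff.1 (zero_lt_one.trans hz1))
        exact (hS _ (hzero _ hnorm.le h0)).ne hnorm
  exact ⟨g, hg, fun z hz hzS => hbound z ⟨by simpa using hz, hzS⟩⟩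

/-- The field `L` on the grid points of the unit disk, continued outside by `radialGradient u`. -/
def cappedField (u : ℂ → ℝ) (h : ℝ) (L : ℤ × ℤ → ℂ) (v : ℤ × ℤ) : ℂ :=
  if ‖gridPoint h v‖ < 1 then L v else radialGradient u (gridPoint h v)

theorem norm_cappedField_sub_le {L : ℤ × ℤ → ℂ} {d : ℝ} (hd : 0 ≤ d) {v : ℤ × ℤ}
    (hL : ‖gridPoint h v‖ < 1 → ‖L v - ∇ u (gridPoint h v)‖ ≤ d) :
    ‖cappedField u h L v - radialGradient u (gridPoint h v)‖ ≤ d := by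
  unfold cappedField
  split_ifs with hv
  · rw [radialGradient_of_norm_le_one u hv.le]
    exact hL hv
  · rwa [sub_self, norm_zero]

theorem forall_aroundVertex {L U : ℤ × ℤ → ℂ} {v : ℤ × ℤ} {P : ℂ → Prop} (h0 : P (L v) ∧ P (U v))
    (h : ∀ k, P (L (v + hexDir k)) ∧ P (U (v + hexDir k))) (k : Fin 6) :
    P (aroundVertex L U v k) := by
  fin_cases k
  exacts [h0.1, h0.2, (h 3).1, (h 4).2, (h 4).1, (h 5).2]

theorem GridApprox.vertexTurn_cappedField_eq_zero (hF : GridApprox u F h e) {v : ℤ × ℤ}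
    (hosc : ∀ z, ‖z - gridPoint h v‖ ≤ 2 * h →
      ‖radialGradient u z - radialGradient u (gridPoint h v)‖ ≤ e)
    (hgrad : 4 * e < ‖radialGradient u (gridPoint h v)‖) :
    vertexTurn (cappedField u h (lowerGradient F h)) (cappedField u h (upperGradient F h)) v =
      0 := by
  have hh := hF.mesh_pos
  have hclose : ∀ w (L : ℤ × ℤ → ℂ), ‖gridPoint h w - gridPoint h v‖ ≤ 2 * h →
      (‖gridPoint h w‖ < 1 → ‖L w - ∇ u (gridPoint h w)‖ ≤ 3 * e) →
      0 < (cappedField u h L w / radialGradient u (gridPoint h v)).re := by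
    intro w L hw hL
    apply re_div_pos_of_norm_sub_lt
    linarith [norm_sub_le_norm_sub_add_norm_sub (cappedField u h L w)
      (radialGradient u (gridPoint h w)) (radialGradient u (gridPoint h v)), hosc _ hw,
      norm_cappedField_sub_le (mul_nonneg zero_le_three hF.error_nonneg) hL]
  have hboth := fun w hw =>
    And.intro (hclose w (lowerGradient F h) hw fun hw1 => hF.norm_aroundVertex_sub_le hw1 0)
      (hclose w (upperGradient F h) hw fun hw1 => hF.norm_aroundVertex_sub_le hw1 1)
  refine vertexTurn_eq_zero (forall_aroundVertex
    (P := fun z => 0 < (z / radialGradient u (gridPoint h v)).re) (hboth v ?_) fun k => hboth _ ?_)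
  · rw [sub_self, norm_zero]
    positivity
  · exact norm_gridPoint_add_hexDir_sub_le hh.le v k

theorem vertexTurn_cappedField (u : ℂ → ℝ) (hh : 0 ≤ h) (L U : ℤ × ℤ → ℂ) {v : ℤ × ℤ}
    (hv : ‖gridPoint h v‖ + 2 * h < 1) :
    vertexTurn (cappedField u h L) (cappedField u h U) v = vertexTurn L U v := by
  have hv0 : ‖gridPoint h v‖ < 1 := by linarith
  have hvk : ∀ k, ‖gridPoint h (v + hexDir k)‖ < 1 := fun k => by
    linarith [norm_le_norm_add_norm_sub' (gridPoint h (v + hexDir k)) (gridPoint h v),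
      norm_gridPoint_add_hexDir_sub_le hh v k]
  simp only [vertexTurn, aroundVertex, cappedField, hv0, hvk, if_true]

/-- The vertices of the grid with coordinates between `-m` and `m`, without the lowest ones. -/
def gridBox (m : ℕ) : Finset (ℤ × ℤ) := Finset.Ioc (-m : ℤ) m ×ˢ Finset.Ioc (-m : ℤ) m

theorem mem_gridBox_of_norm_lt {m : ℕ} (hm : h * m = 1) (hh : 0 < h) {v : ℤ × ℤ}
    (hv : ‖gridPoint h v‖ < 1) : v ∈ gridBox m := by
  have hbound : ∀ x : ℤ, |h * x| < 1 → x ∈ Finset.Ioc (-m : ℤ) m := by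
    intro x hx
    rw [← hm, abs_mul, abs_of_pos hh, mul_lt_mul_iff_right₀ hh, abs_lt] at hx
    exact Finset.mem_Ioc.2 ⟨by exact_mod_cast hx.1, by exact_mod_cast hx.2.le⟩
  exact Finset.mem_product.2 ⟨hbound _ ((Complex.abs_re_le_norm (gridPoint h v)).trans_lt hv),
    hbound _ ((Complex.abs_im_le_norm (gridPoint h v)).trans_lt hv)⟩

theorem norm_gridPoint_le_two {m : ℕ} (hm : h * m = 1) (hh : 0 < h) {v : ℤ × ℤ}
    (hv : v ∈ gridBox m) : ‖gridPoint h v‖ ≤ 2 := by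
  have hbound : ∀ x ∈ Finset.Ioc (-m : ℤ) m, |h * (x : ℝ)| ≤ 1 := by
    intro x hx
    rw [Finset.mem_Ioc] at hx
    rw [← hm, abs_mul, abs_of_pos hh, mul_le_mul_iff_right₀ hh, abs_le]
    exact ⟨by exact_mod_cast hx.1.le, by exact_mod_cast hx.2⟩
  obtain ⟨hv1, hv2⟩ := Finset.mem_product.1 hv
  exact (Complex.norm_le_abs_re_add_abs_im _).trans
    ((add_le_add (hbound _ hv1) (hbound _ hv2)).trans_eq one_add_one_eq_two)

theorem GridApprox.sum_vertexTurn_cappedField (hF : GridApprox u F h e) {m : ℕ} (hm : h * m = 1)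
    {S : Finset ℂ} {ρ r : ℝ} (hS : ∀ p ∈ S, ‖p‖ + 2 * ρ < 1)
    (hsep : ∀ p ∈ S, ∀ q ∈ S, p ≠ q → 4 * ρ ≤ ‖p - q‖) (hrρ : 8 * r ≤ ρ) (hhr : 4 * h ≤ r)
    (hosc : ∀ z w, ‖z‖ ≤ 2 → ‖w - z‖ ≤ 2 * h → ‖radialGradient u w - radialGradient u z‖ ≤ e)
    (hgrad : ∀ z, ‖z‖ ≤ 2 → (∀ p ∈ S, r ≤ ‖z - p‖) → 4 * e < ‖radialGradient u z‖) :
    ∑ v ∈ gridBox m, vertexTurn (cappedField u h (lowerGradient F h))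
        (cappedField u h (upperGradient F h)) v =
      2 * π * ∑ p ∈ S, ∑ v ∈ gridSquare h r p, (discreteIndex F v : ℝ) := by
  classical
  have hh := hF.mesh_pos
  have hdisk : ∀ p ∈ S, ∀ v ∈ gridSquare h r p, ‖gridPoint h v‖ + 2 * h < 1 := by
    intro p hp v hv
    linarith [norm_le_norm_add_norm_sub' (gridPoint h v) p, norm_sub_le_of_mem_gridSquare hh hv,
      hS p hp]
  have hdisjoint : (S : Set ℂ).PairwiseDisjoint (gridSquare h r) := by
    intro p hp q hq hpq
    refine Finset.disjoint_left.2 fun v hv hv' => ?_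
    have hpv := norm_sub_le_of_mem_gridSquare hh hv
    rw [norm_sub_rev] at hpv
    linarith [hsep p hp q hq hpq, norm_sub_le_norm_sub_add_norm_sub p (gridPoint h v) q,
      norm_sub_le_of_mem_gridSquare hh hv']
  rw [← Finset.sum_subset (s₁ := S.biUnion (gridSquare h r)), Finset.sum_biUnion hdisjoint,
    Finset.mul_sum]
  · refine Finset.sum_congr rfl fun p hp => ?_
    rw [Finset.mul_sum]
    refine Finset.sum_congr rfl fun v hv => ?_
    rw [vertexTurn_cappedField u hh.le _ _ (hdisk p hp v hv), vertexTurn_gradient hh (hF.ne v)]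
  · intro v hv
    obtain ⟨p, hp, hvp⟩ := Finset.mem_biUnion.1 hv
    exact mem_gridBox_of_norm_lt hm hh (by linarith [hdisk p hp v hvp])
  · intro v hv hvS
    have hv2 := norm_gridPoint_le_two hm hh hv
    refine hF.vertexTurn_cappedField_eq_zero (fun z => hosc _ z hv2) (hgrad _ hv2 fun p hp => ?_)
    exact le_norm_sub_of_notMem_gridSquare hh fun hvp => hvS (Finset.mem_biUnion.2 ⟨p, hp, hvp⟩)

theorem exists_forall_norm_sub_sub_fderiv_le {E G : Type*} [NormedAddCommGroup E]
    [NormedSpace ℝ E] [NormedAddCommGroup G] [NormedSpace ℝ G] {f : E → G} (hf : ContDiff ℝ 1 f)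
    {K : Set E} (hK : IsCompact K) {ε : ℝ} (hε : 0 < ε) :
    ∃ δ > 0, ∀ z ∈ K, ∀ w, ‖w - z‖ < δ → ‖f w - f z - fderiv ℝ f z (w - z)‖ ≤ ε * ‖w - z‖ := by
  obtain ⟨δ, hδ, hosc⟩ := Metric.mem_uniformity_dist.1
    (hK.uniformContinuousAt_of_continuousAt (fderiv ℝ f)
      (fun z _ => (hf.continuous_fderiv one_ne_zero).continuousAt) (Metric.dist_mem_uniformity hε))
  refine ⟨δ, hδ, fun z hz w hw => ?_⟩
  refine (convex_ball z δ).norm_image_sub_le_of_norm_hasFDerivWithin_le'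
    (fun x _ => (hf.differentiable one_ne_zero x).hasFDerivAt.hasFDerivWithinAt) (fun x hx => ?_)
    (Metric.mem_ball_self hδ) (mem_ball_iff_norm.2 hw)
  rw [← dist_eq_norm, dist_comm]
  exact (hosc (Metric.mem_ball'.1 hx) hz).le

theorem hexDir_fst_add_snd_ne_zero (k : Fin 6) : ((hexDir k).1 : ℝ) + (hexDir k).2 ≠ 0 := by
  fin_cases k <;> simp [hexDir]

theorem abs_hexDir_fst_add_snd_le (k : Fin 6) : |((hexDir k).1 : ℝ) + (hexDir k).2| ≤ 2 := by
  fin_cases k <;> simp [hexDir] <;> norm_num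

theorem exists_add_mul_ne (f : ℤ × ℤ → ℝ) {ε : ℝ} (hε : 0 < ε) :
    ∃ t, 0 < t ∧ t < ε ∧ ∀ v k, f (v + hexDir k) + t * ((v + hexDir k).1 + (v + hexDir k).2) ≠
      f v + t * (v.1 + v.2) := by
  have hcountable : (Set.range fun x : (ℤ × ℤ) × Fin 6 => (f x.1 - f (x.1 + hexDir x.2)) /
      ((hexDir x.2).1 + (hexDir x.2).2)).Countable := Set.countable_range _
  obtain ⟨t, ht, h0, hlt⟩ := (hcountable.dense_compl ℝ).exists_between hε
  refine ⟨t, h0, hlt, fun v k heq => ht ⟨(v, k), (div_eq_iff (hexDir_fst_add_snd_ne_zero k)).2 ?_⟩⟩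
  simp only [Prod.fst_add, Prod.snd_add, Int.cast_add] at heq
  linear_combination -heq

theorem eventually_exists_gridApprox (hu : ContDiff ℝ 1 u) (he : 0 < e) :
    ∀ᶠ h in 𝓝[>] 0, ∃ F, GridApprox u F h e := by
  obtain ⟨δ, hδ, htaylor⟩ := exists_forall_norm_sub_sub_fderiv_le hu
    (isCompact_closedBall (0 : ℂ) 1) (ε := e / 4) (by linarith)
  filter_upwards [self_mem_nhdsWithin, nhdsWithin_le_nhds (Iio_mem_nhds (half_pos hδ))]
    with h (hh : 0 < h) hhδ
  rw [Set.mem_Iio, lt_div_iff₀ two_pos, mul_comm] at hhδ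
  obtain ⟨t, ht0, ht, hne⟩ := exists_add_mul_ne (fun v => u (gridPoint h v))
    (ε := e * h / 4) (by positivity)
  refine ⟨fun v => u (gridPoint h v) + t * (v.1 + v.2), hh, fun v hv => ?_, fun v hv k => ?_, hne⟩
  · have h1 : |h * (v.1 : ℝ)| ≤ 1 := (Complex.abs_re_le_norm _).trans hv.le
    have h2 : |h * (v.2 : ℝ)| ≤ 1 := (Complex.abs_im_le_norm _).trans hv.le
    rw [abs_mul, abs_of_pos hh] at h1 h2
    rw [add_sub_cancel_left, abs_mul, abs_of_pos ht0]
    calc t * |(v.1 + v.2 : ℝ)| ≤ e * h / 4 * (|(v.1 : ℝ)| + |(v.2 : ℝ)|) :=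
          mul_le_mul ht.le (abs_add_le _ _) (abs_nonneg _) (by positivity)
      _ = e * (h * |(v.1 : ℝ)| + h * |(v.2 : ℝ)|) / 4 := by ring
      _ ≤ e * (1 + 1) / 4 := by gcongr
      _ ≤ e := by linarith
  · have hdir : gridPoint h (v + hexDir k) - gridPoint h v = h • hexVec k := by
      rw [gridPoint_add_hexDir, add_sub_cancel_left]
    have hdist := norm_gridPoint_add_hexDir_sub_le hh.le v k
    have hu1 := htaylor (gridPoint h v) (by simpa using hv.le) _ (hdist.trans_lt hhδ)
    rw [hdir, map_smul, ← inner_gradient_left, real_inner_comm, smul_eq_mul, ← hdir,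
      Real.norm_eq_abs] at hu1
    have ht1 : |t * ((hexDir k).1 + (hexDir k).2 : ℝ)| ≤ e * h / 4 * 2 := by
      rw [abs_mul, abs_of_pos ht0]
      gcongr
      exact abs_hexDir_fst_add_snd_le k
    calc _ = |(u (gridPoint h (v + hexDir k)) - u (gridPoint h v) -
            h * ⟪hexVec k, ∇ u (gridPoint h v)⟫) + t * ((hexDir k).1 + (hexDir k).2)| := by
          simp only [Prod.fst_add, Prod.snd_add, Int.cast_add]
          ring_nf
      _ ≤ e / 4 * (2 * h) + e * h / 4 * 2 :=
          (abs_add_le _ _).trans (add_le_add (hu1.trans (by gcongr)) ht1)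
      _ = e * h := by ring

end Grid

section Boundary

open scoped Real

/-- `α` is a continuous choice of argument along the curve `w`. -/
structure IsArgLift (w : ℝ → ℂ) (α : ℝ → ℝ) : Prop where
  continuous : Continuous α
  eq_norm_mul_exp : ∀ t, w t = ‖w t‖ * Complex.exp (α t * Complex.I)

variable {w : ℝ → ℂ} {α : ℝ → ℝ}

theorem IsArgLift.arg_div (hα : IsArgLift w α) (hne : ∀ t, w t ≠ 0) {s t : ℝ}
    (hst : |α s - α t| < π) : (w t / w s).arg = α t - α s := by
  have hquot : w t / w s = (‖w t‖ / ‖w s‖ : ℝ) * Complex.exp ((α t - α s : ℝ) * Complex.I) := by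
    conv_lhs => rw [hα.eq_norm_mul_exp t, hα.eq_norm_mul_exp s, mul_div_mul_comm,
      ← Complex.exp_sub, ← sub_mul]
    push_cast
    rfl
  rw [abs_sub_comm, abs_lt] at hst
  rw [hquot, Complex.exp_mul_I, ← Complex.ofReal_cos, ← Complex.ofReal_sin]
  simpa using Complex.arg_mul_cos_add_sin_mul_I
    (div_pos (norm_pos_iff.2 (hne t)) (norm_pos_iff.2 (hne s))) ⟨hst.1, hst.2.le⟩

theorem IsArgLift.turnAngle_eq (hα : IsArgLift w α) (hne : ∀ t, w t ≠ 0) {s t : ℝ}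
    (hst : |α s - α t| < π) : turnAngle (w s) (w t) = α t - α s := by
  rw [turnAngle, hα.arg_div hne hst, hα.arg_div hne (by rwa [abs_sub_comm])]
  ring

theorem turnAngle_self (x : ℂ) : turnAngle x x = 0 := by
  rw [turnAngle, sub_self, zero_div]

theorem exp_mul_one_add_mul_I (c y : ℝ) :
    Complex.exp (c * Complex.I) * (1 + y * Complex.I) =
      √(1 + y ^ 2) • Complex.exp ((c + Real.arctan y : ℝ) * Complex.I) := by
  have hsqrt : (√(1 + y ^ 2) : ℝ) ≠ 0 := (Real.sqrt_pos.2 (by positivity)).ne'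
  have hpolar : (1 + y * Complex.I : ℂ) =
      √(1 + y ^ 2) * Complex.exp (Real.arctan y * Complex.I) := by
    rw [Complex.exp_mul_I, ← Complex.ofReal_cos, ← Complex.ofReal_sin, Real.cos_arctan,
      Real.sin_arctan]
    push_cast
    field_simp [Complex.ofReal_ne_zero.2 hsqrt]
  rw [hpolar, Complex.real_smul, Complex.ofReal_add, add_mul, Complex.exp_add]
  ring

theorem abs_arctan_sub_arctan_le (x y : ℝ) : |Real.arctan x - Real.arctan y| ≤ |x - y| := by
  have hderiv : ∀ x, ‖deriv Real.arctan x‖₊ ≤ 1 := fun x => by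
    rw [← NNReal.coe_le_coe, coe_nnnorm, Real.deriv_arctan, Real.norm_of_nonneg (by positivity)]
    exact (div_le_one (by positivity)).2 (by nlinarith [sq_nonneg x])
  simpa [Real.dist_eq] using
    (lipschitzWith_of_nnnorm_deriv_le Real.differentiable_arctan hderiv).dist_le_mul x y

/-- The grid field `L` equals `w t` at all points with argument `t` outside the open unit disk. -/
def IsRadialOutside (h : ℝ) (L : ℤ × ℤ → ℂ) (w : ℝ → ℂ) : Prop :=
  ∀ v (ρ t : ℝ), 1 ≤ ρ → gridPoint h v = ρ • Complex.exp (t * Complex.I) → L v = w t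

theorem isRadialOutside_cappedField (u : ℂ → ℝ) (h : ℝ) (L : ℤ × ℤ → ℂ) :
    IsRadialOutside h (cappedField u h L) fun t => gradient u (Complex.exp (t * Complex.I)) := by
  intro v ρ t hρ hv
  have hexp := Complex.norm_exp_ofReal_mul_I t
  have hnorm : ‖gridPoint h v‖ = ρ := by
    rw [hv, norm_smul, hexp, mul_one, Real.norm_of_nonneg (zero_le_one.trans hρ)]
  rw [cappedField, if_neg (hnorm ▸ hρ.not_gt), hv, radialGradient_smul u hρ hexp]

theorem IsRadialOutside.apply_eq {h : ℝ} {L : ℤ × ℤ → ℂ} (hL : IsRadialOutside h L w)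
    {v : ℤ × ℤ} {c y : ℝ}
    (hv : gridPoint h v = Complex.exp (c * Complex.I) * (1 + y * Complex.I)) :
    L v = w (c + Real.arctan y) :=
  hL v _ _ (Real.one_le_sqrt.2 (le_add_of_nonneg_right (sq_nonneg y)))
    (hv.trans (exp_mul_one_add_mul_I c y))

theorem IsArgLift.turnAngle_add_turnAngle (hα : IsArgLift w α) (hne : ∀ t, w t ≠ 0) {h : ℝ}
    {L U : ℤ × ℤ → ℂ} (hL : IsRadialOutside h L w) (hU : IsRadialOutside h U w)
    (hfine : ∀ s ∈ Set.Icc (-(π / 2)) (2 * π), ∀ t, |s - t| ≤ h → |α s - α t| < π)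
    {v v' : ℤ × ℤ} {c y y' : ℝ} (hc : c ∈ Set.Icc 0 (3 * π / 2))
    (hv : gridPoint h v = Complex.exp (c * Complex.I) * (1 + y * Complex.I))
    (hv' : gridPoint h v' = Complex.exp (c * Complex.I) * (1 + y' * Complex.I))
    (hy : |y - y'| ≤ h) : turnAngle (U v) (L v') + turnAngle (L v') (U v') =
      α (c + Real.arctan y') - α (c + Real.arctan y) := by
  have hangle : c + Real.arctan y ∈ Set.Icc (-(π / 2)) (2 * π) :=
    ⟨by linarith [hc.1, Real.neg_pi_div_two_lt_arctan y],
      by linarith [hc.2, Real.arctan_lt_pi_div_two y]⟩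
  rw [hU.apply_eq hv, hL.apply_eq hv', hU.apply_eq hv', turnAngle_self, add_zero]
  refine hα.turnAngle_eq hne (hfine _ hangle _ ?_)
  rw [add_sub_add_left_eq_sub]
  exact (abs_arctan_sub_arctan_le y y').trans hy

theorem gridPoint_right {h x : ℝ} {i : ℤ} (hi : h * i = 1) (j : ℤ) (hj : h * j = x) :
    gridPoint h (i, j) = Complex.exp ((0 : ℝ) * Complex.I) * (1 + x * Complex.I) := by
  apply Complex.ext <;> simp [gridPoint, hi, hj]

theorem gridPoint_top {h x : ℝ} {j : ℤ} (hj : h * j = 1) (i : ℤ) (hi : h * i = -x) :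
    gridPoint h (i, j) = Complex.exp ((π / 2 : ℝ) * Complex.I) * (1 + x * Complex.I) := by
  rw [Complex.ofReal_div, Complex.ofReal_ofNat, Complex.exp_pi_div_two_mul_I]
  apply Complex.ext <;> simp [gridPoint, hi, hj]

theorem gridPoint_left {h x : ℝ} {i : ℤ} (hi : h * i = -1) (j : ℤ) (hj : h * j = -x) :
    gridPoint h (i, j) = Complex.exp (π * Complex.I) * (1 + x * Complex.I) := by
  rw [Complex.exp_pi_mul_I]
  apply Complex.ext <;> simp [gridPoint, hi, hj]

theorem gridPoint_bottom {h x : ℝ} {j : ℤ} (hj : h * j = -1) (i : ℤ) (hi : h * i = x) :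
    gridPoint h (i, j) = Complex.exp ((3 * π / 2 : ℝ) * Complex.I) * (1 + x * Complex.I) := by
  have hangle : ((3 * π / 2 : ℝ) : ℂ) * Complex.I = π * Complex.I + π / 2 * Complex.I := by
    push_cast
    ring
  rw [hangle, Complex.exp_add, Complex.exp_pi_mul_I, Complex.exp_pi_div_two_mul_I]
  apply Complex.ext <;> simp [gridPoint, hi, hj]

theorem abs_mul_sub_one_sub_mul {h : ℝ} (hh : 0 ≤ h) (j : ℤ) : |h * (j - 1 : ℤ) - h * j| = h := by
  rw [Int.cast_sub, Int.cast_one, mul_sub, mul_one, sub_sub_cancel_left, abs_neg, abs_of_nonneg hh]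

theorem IsArgLift.sum_columnTurn_sub (hα : IsArgLift w α) (hne : ∀ t, w t ≠ 0) {h : ℝ}
    {m : ℕ} (hh : 0 < h) (hm : h * m = 1) {L U : ℤ × ℤ → ℂ} (hL : IsRadialOutside h L w)
    (hU : IsRadialOutside h U w)
    (hfine : ∀ s ∈ Set.Icc (-(π / 2)) (2 * π), ∀ t, |s - t| ≤ h → |α s - α t| < π) :
    ∑ j ∈ Finset.Ioc (-m : ℤ) m, (columnTurn L U m j - columnTurn L U (-m) j) =
      α (π / 4) - α (-(π / 4)) + (α (5 * π / 4) - α (3 * π / 4)) := by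
  have hπ := Real.pi_pos
  have hpos : h * (m : ℤ) = 1 := mod_cast hm
  have hneg : h * (-m : ℤ) = -1 := by rw [Int.cast_neg, mul_neg, hpos]
  have hstep := fun j => (abs_mul_sub_one_sub_mul hh.le j).le
  set f : ℤ → ℝ := fun j => α (0 + Real.arctan (h * j)) - α (π + Real.arctan (-(h * j))) with hf
  have hcolumn : ∀ j, columnTurn L U m j - columnTurn L U (-m) j = f j - f (j - 1) := by
    intro j
    rw [columnTurn, columnTurn, hα.turnAngle_add_turnAngle hne hL hU hfine ⟨le_rfl, by positivity⟩
        (gridPoint_right hpos _ rfl) (gridPoint_right hpos _ rfl) (hstep j),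
      hα.turnAngle_add_turnAngle hne hL hU hfine ⟨hπ.le, by linarith⟩
        (gridPoint_left hneg _ (neg_neg _).symm) (gridPoint_left hneg _ (neg_neg _).symm)
        (by rw [neg_sub_neg, abs_sub_comm]; exact hstep j)]
    ring
  rw [Finset.sum_congr rfl fun j _ => hcolumn j, sum_Ioc_sub_sub_one f (by omega)]
  simp only [hf, hpos, hneg, neg_neg, Real.arctan_neg, Real.arctan_one]
  ring_nf

theorem IsArgLift.sum_rowTurn_sub (hα : IsArgLift w α) (hne : ∀ t, w t ≠ 0) {h : ℝ}
    {m : ℕ} (hh : 0 < h) (hm : h * m = 1) {L U : ℤ × ℤ → ℂ} (hL : IsRadialOutside h L w)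
    (hU : IsRadialOutside h U w)
    (hfine : ∀ s ∈ Set.Icc (-(π / 2)) (2 * π), ∀ t, |s - t| ≤ h → |α s - α t| < π) :
    ∑ i ∈ Finset.Ioc (-m : ℤ) m, (rowTurn L U i m - rowTurn L U i (-m)) =
      α (3 * π / 4) - α (π / 4) + (α (7 * π / 4) - α (5 * π / 4)) := by
  have hπ := Real.pi_pos
  have hpos : h * (m : ℤ) = 1 := mod_cast hm
  have hneg : h * (-m : ℤ) = -1 := by rw [Int.cast_neg, mul_neg, hpos]
  have hstep := fun i => (abs_mul_sub_one_sub_mul hh.le i).le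
  set f : ℤ → ℝ := fun i => α (3 * π / 2 + Real.arctan (h * i)) -
    α (π / 2 + Real.arctan (-(h * i))) with hf
  have hrow : ∀ i, rowTurn L U i m - rowTurn L U i (-m) = f i - f (i - 1) := by
    intro i
    rw [rowTurn, rowTurn, hα.turnAngle_add_turnAngle hne hL hU hfine
        ⟨by positivity, by linarith⟩ (gridPoint_top hpos _ (neg_neg _).symm)
        (gridPoint_top hpos _ (neg_neg _).symm) (by rw [neg_sub_neg]; exact hstep i),
      hα.turnAngle_add_turnAngle hne hL hU hfine ⟨by positivity, le_rfl⟩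
        (gridPoint_bottom hneg _ rfl) (gridPoint_bottom hneg _ rfl)
        (by rw [abs_sub_comm]; exact hstep i)]
    ring
  rw [Finset.sum_congr rfl fun i _ => hrow i, sum_Ioc_sub_sub_one f (by omega)]
  simp only [hf, hpos, hneg, neg_neg, Real.arctan_neg, Real.arctan_one]
  ring_nf

theorem IsArgLift.sum_vertexTurn_gridBox (hα : IsArgLift w α) (hne : ∀ t, w t ≠ 0) {h : ℝ}
    {m : ℕ} (hh : 0 < h) (hm : h * m = 1) {L U : ℤ × ℤ → ℂ} (hL : IsRadialOutside h L w)
    (hU : IsRadialOutside h U w)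
    (hfine : ∀ s ∈ Set.Icc (-(π / 2)) (2 * π), ∀ t, |s - t| ≤ h → |α s - α t| < π) :
    ∑ v ∈ gridBox m, vertexTurn L U v = α (7 * π / 4) - α (-(π / 4)) := by
  rw [gridBox, sum_vertexTurn_box L U (by omega),
    hα.sum_columnTurn_sub hne hh hm hL hU hfine, hα.sum_rowTurn_sub hne hh hm hL hU hfine]
  ring

end Boundary

section Winding

open scoped Real Gradient Topology

variable {u : ℂ → ℝ}

theorem exists_separation {S : Finset ℂ} (hS : ∀ p ∈ S, ‖p‖ < 1) : ∃ ρ > 0,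
    (∀ p ∈ S, ‖p‖ + 2 * ρ < 1) ∧ ∀ p ∈ S, ∀ q ∈ S, p ≠ q → 4 * ρ ≤ ‖p - q‖ := by
  have hsmall : ∀ c > 0, ∀ᶠ ρ in 𝓝[>] (0 : ℝ), ρ < c := fun c hc =>
    nhdsWithin_le_nhds (Iio_mem_nhds hc)
  have hball : ∀ᶠ ρ in 𝓝[>] (0 : ℝ), ∀ p ∈ S, ‖p‖ + 2 * ρ < 1 := by
    refine (Finset.eventually_all S).2 fun p hp => ?_
    filter_upwards [hsmall ((1 - ‖p‖) / 2) (by linarith [hS p hp])] with ρ hρ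
    linarith
  have hsep : ∀ᶠ ρ in 𝓝[>] (0 : ℝ), ∀ p ∈ S, ∀ q ∈ S, p ≠ q → 4 * ρ ≤ ‖p - q‖ := by
    refine (Finset.eventually_all S).2 fun p _ => (Finset.eventually_all S).2 fun q _ => ?_
    rw [Filter.eventually_imp_distrib_left]
    intro hpq
    filter_upwards [hsmall (‖p - q‖ / 4) (div_pos (norm_sub_pos_iff.2 hpq) four_pos)] with ρ hρ
    linarith
  exact (eventually_mem_nhdsWithin.and (hball.and hsep)).exists

theorem exists_forall_abs_sub_lt (hu : Continuous u) (S : Finset ℂ) {ρ η : ℝ} (hρ : 0 < ρ)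
    (hη : 0 < η) : ∃ r > 0, 8 * r ≤ ρ ∧ ∀ p ∈ S, ∀ z, ‖z - p‖ ≤ 2 * r → |u z - u p| < η := by
  have hosc : ∀ᶠ r in 𝓝[>] (0 : ℝ), ∀ p ∈ S, ∀ z, ‖z - p‖ ≤ 2 * r → |u z - u p| < η := by
    refine (Finset.eventually_all S).2 fun p _ => ?_
    obtain ⟨δ, hδ, hu⟩ := Metric.continuousAt_iff.1 (hu.continuousAt (x := p)) η hη
    filter_upwards [nhdsWithin_le_nhds (Iio_mem_nhds (half_pos hδ))] with r hr z hz
    exact hu (mem_ball_iff_norm.2 (by linarith [Set.mem_Iio.1 hr]))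
  have hsmall : ∀ᶠ r in 𝓝[>] (0 : ℝ), 8 * r ≤ ρ := by
    filter_upwards [nhdsWithin_le_nhds (Iio_mem_nhds (div_pos hρ (by norm_num : (0 : ℝ) < 8)))]
      with r hr
    linarith [Set.mem_Iio.1 hr]
  exact (eventually_mem_nhdsWithin.and (hsmall.and hosc)).exists

theorem eventually_norm_radialGradient_sub_le (hu : ContDiff ℝ 1 u) {e : ℝ} (he : 0 < e) :
    ∀ᶠ h in 𝓝[>] (0 : ℝ), ∀ z w, ‖z‖ ≤ 2 → ‖w - z‖ ≤ 2 * h →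
      ‖radialGradient u w - radialGradient u z‖ ≤ e := by
  obtain ⟨δ, hδ, hosc⟩ := Metric.mem_uniformity_dist.1
    ((isCompact_closedBall (0 : ℂ) 2).uniformContinuousAt_of_continuousAt (radialGradient u)
      (fun z _ => (continuous_radialGradient hu).continuousAt) (Metric.dist_mem_uniformity he))
  filter_upwards [nhdsWithin_le_nhds (Iio_mem_nhds (half_pos hδ))] with h hh z w hz hw
  rw [← dist_eq_norm, dist_comm]
  refine (hosc ?_ (mem_closedBall_zero_iff.2 hz)).le
  rw [dist_comm, dist_eq_norm]
  linarith [Set.mem_Iio.1 hh]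

theorem eventually_abs_sub_lt_pi {α : ℝ → ℝ} (hα : Continuous α) {K : Set ℝ} (hK : IsCompact K) :
    ∀ᶠ h in 𝓝[>] (0 : ℝ), ∀ s ∈ K, ∀ t, |s - t| ≤ h → |α s - α t| < π := by
  obtain ⟨δ, hδ, hosc⟩ := Metric.mem_uniformity_dist.1 (hK.uniformContinuousAt_of_continuousAt α
    (fun t _ => hα.continuousAt) (Metric.dist_mem_uniformity Real.pi_pos))
  filter_upwards [nhdsWithin_le_nhds (Iio_mem_nhds hδ)] with h hh s hs t hst
  exact hosc (hst.trans_lt hh) hs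

theorem forall_le_norm_sub {S : Finset ℂ} {ρ s : ℝ}
    (hsep : ∀ p ∈ S, ∀ q ∈ S, p ≠ q → 4 * ρ ≤ ‖p - q‖) {p z : ℂ} (hp : p ∈ S)
    (hsz : s ≤ ‖z - p‖) (hzρ : ‖z - p‖ < 2 * ρ) : ∀ q ∈ S, s ≤ ‖z - q‖ := by
  intro q hq
  rcases eq_or_ne q p with rfl | hqp
  · exact hsz
  · have htri := norm_sub_le_norm_sub_add_norm_sub q z p
    rw [norm_sub_rev q z] at htri
    linarith [hsep q hq p hp hqp]

theorem exists_mul_natCast_eq_one_of_eventually {P : ℝ → Prop} (hP : ∀ᶠ h in 𝓝[>] (0 : ℝ), P h) :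
    ∃ (h : ℝ) (m : ℕ), 0 < h ∧ h * m = 1 ∧ P h := by
  obtain ⟨m, hPm, hm⟩ := ((((tendsto_inv_atTop_nhdsGT_zero (𝕜 := ℝ)).comp
    tendsto_natCast_atTop_atTop).eventually hP).and (Filter.eventually_gt_atTop 0)).exists
  exact ⟨(m : ℝ)⁻¹, m, by positivity, inv_mul_cancel₀ (by positivity), hPm⟩

theorem gradient_exp_ne_zero {S : Finset ℂ} (hS : ∀ p ∈ S, ‖p‖ < 1)
    (hzero : ∀ z, ‖z‖ ≤ 1 → ∇ u z = 0 → z ∈ S) (t : ℝ) :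
    ∇ u (Complex.exp (t * Complex.I)) ≠ 0 := fun h0 => by
  have hexp := Complex.norm_exp_ofReal_mul_I t
  exact (hS _ (hzero _ hexp.le h0)).ne hexp

/-- The full turn starts at `-π / 4` because the boundary of the grid square is traversed from a
corner. -/
theorem IsArgLift.exists_index_le_one (hu : ContDiff ℝ 1 u) {S : Finset ℂ}
    (hS : ∀ p ∈ S, ‖p‖ < 1) (hzero : ∀ z, ‖z‖ ≤ 1 → ∇ u z = 0 → z ∈ S) {α : ℝ → ℝ}
    (hα : IsArgLift (fun t => ∇ u (Complex.exp (t * Complex.I))) α) :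
    ∃ n : ℂ → ℤ, (∀ p ∈ S, n p ≤ 1) ∧
      α (7 * π / 4) - α (-(π / 4)) = 2 * π * ∑ p ∈ S, (n p : ℝ) := by
  have hne := fun t => gradient_exp_ne_zero hS hzero t
  obtain ⟨ρ, hρ, hSρ, hsep⟩ := exists_separation hS
  obtain ⟨g, hg, hfar⟩ := exists_forall_le_norm_radialGradient hu hS hzero (half_pos hρ)
  obtain ⟨η, hη, hηρ⟩ : ∃ η > 0, η * (2 / ρ) = g / 8 :=
    ⟨g * ρ / 16, by positivity, by field_simp; norm_num⟩
  obtain ⟨r, hr, hrρ, hosc⟩ := exists_forall_abs_sub_lt hu.continuous S hρ (half_pos hη)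
  obtain ⟨g', hg', hnear⟩ := exists_forall_le_norm_radialGradient hu hS hzero hr
  obtain ⟨e, he, heg, heg', heη⟩ : ∃ e > 0, 8 * e < g ∧ 4 * e < g' ∧ e ≤ η / 2 := by
    refine ⟨min (min g g') η / 9, by positivity, ?_, ?_, ?_⟩ <;>
      linarith [min_le_left (min g g') η, min_le_right (min g g') η, min_le_left g g',
        min_le_right g g']
  have hmesh : ∀ᶠ h in 𝓝[>] (0 : ℝ), h ≤ r / 4 :=
    nhdsWithin_le_nhds (Iic_mem_nhds (div_pos hr four_pos))
  obtain ⟨h, m, hh, hm, hhr, ⟨F, hF⟩, hV, hfine⟩ := exists_mul_natCast_eq_one_of_eventually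
    (hmesh.and ((eventually_exists_gridApprox hu he).and
      ((eventually_norm_radialGradient_sub_le hu he).and
        (eventually_abs_sub_lt_pi hα.continuous (isCompact_Icc (a := -(π / 2)) (b := 2 * π))))))
  refine ⟨fun p => ∑ v ∈ gridSquare h r p, discreteIndex F v, fun p hp => ?_, ?_⟩
  · have hgrad : ∀ z, ‖z - p‖ < 2 * ρ → ∇ u z = radialGradient u z ∧ ‖z‖ ≤ 2 := fun z hz => by
      have htri := norm_sub_norm_le z p
      have hpρ := hSρ p hp
      exact ⟨(radialGradient_of_norm_le_one u (by linarith)).symm, by linarith⟩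
    refine hF.sum_discreteIndex_gridSquare_le_one (hSρ p hp) hrρ (by linarith) hη
      (fun z hz => by linarith [hosc p hp z hz]) (fun z hrz hz => ?_) (fun z hρz hz => ?_)
    · rw [(hgrad z hz).1]
      exact heg'.trans_le (hnear z (hgrad z hz).2 (forall_le_norm_sub hsep hp hrz hz))
    · rw [(hgrad z hz).1, hηρ]
      linarith [hfar z (hgrad z hz).2 (forall_le_norm_sub hsep hp hρz hz)]
  · rw [← hα.sum_vertexTurn_gridBox hne hh hm (isRadialOutside_cappedField u h _)
      (isRadialOutside_cappedField u h _) hfine,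
      hF.sum_vertexTurn_cappedField hm hSρ hsep hrρ (by linarith) hV
        fun z hz hzS => heg'.trans_le (hnear z hz hzS)]
    push_cast
    rfl

end Winding

section TangentialComponent

open scoped Real Topology

variable {w : ℝ → ℂ} {β : ℝ → ℝ}

theorem exists_isArgLift (hw : Continuous w) (hne : ∀ t, w t ≠ 0) : ∃ β, IsArgLift w β := by
  have hnorm : ∀ t, (‖w t‖ : ℂ) ≠ 0 := fun t =>
    Complex.ofReal_ne_zero.2 (norm_ne_zero_iff.2 (hne t))
  let direction : C(ℝ, Circle) :=
    ⟨fun t => ⟨w t / ‖w t‖, mem_sphere_zero_iff_norm.2 (by simp [hne t])⟩,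
      (hw.div (Complex.continuous_ofReal.comp hw.norm) hnorm).subtype_mk _⟩
  obtain ⟨β, ⟨-, hβ⟩, -⟩ := Circle.isCoveringMap_exp.existsUnique_continuousMap_lifts direction 0
    (Complex.arg (direction 0)) (Circle.exp_arg _)
  refine ⟨β, β.continuous, fun t => ?_⟩
  have hexp : Complex.exp (β t * Complex.I) = w t / ‖w t‖ :=
    (Circle.coe_exp _).symm.trans (congrArg Subtype.val (congrFun hβ t))
  rw [hexp, mul_div_cancel₀ _ (hnorm t)]

namespace IsArgLift

theorem coe_circleExp (hβ : IsArgLift w β) (hne : ∀ t, w t ≠ 0) (t : ℝ) :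
    (Circle.exp (β t) : ℂ) = w t / ‖w t‖ := by
  rw [Circle.coe_exp, eq_div_iff (Complex.ofReal_ne_zero.2 (norm_ne_zero_iff.2 (hne t))),
    mul_comm, ← hβ.eq_norm_mul_exp t]

theorem add_period_sub_eq (hβ : IsArgLift w β) (hne : ∀ t, w t ≠ 0) {c : ℝ}
    (hper : Function.Periodic w c) (s t : ℝ) : β (s + c) - β s = β (t + c) - β t := by
  have hshift : ∀ x, Circle.exp (β (x + c)) = Circle.exp (β x) := fun x =>
    Subtype.ext (by rw [hβ.coe_circleExp hne, hβ.coe_circleExp hne, hper])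
  have hβc := hβ.continuous
  have hlift : (fun x => β (x + c)) = fun x => β x + (β (t + c) - β t) := by
    refine Circle.isCoveringMap_exp.eq_of_comp_eq (by fun_prop) (by fun_prop) ?_ t (by ring)
    funext x
    simp only [Function.comp, Circle.exp_add, Circle.exp_sub, hshift, div_self', mul_one]
  linarith [congrFun hlift s]

theorem star (hβ : IsArgLift w β) : IsArgLift (fun t => starRingEnd ℂ (w t)) fun t => -β t where
  continuous := hβ.continuous.neg
  eq_norm_mul_exp t := by
    conv_lhs => rw [hβ.eq_norm_mul_exp t]
    rw [map_mul, Complex.conj_ofReal, ← Complex.exp_conj, map_mul, Complex.conj_ofReal,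
      Complex.conj_I, Complex.norm_conj, Complex.ofReal_neg, neg_mul_comm]

/-- On the closed upper half-plane the principal argument is the continuous function
`arccos (re z / ‖z‖)`, so it is itself a lift. -/
theorem sub_eq_arg_sub_arg (hβ : IsArgLift w β) (hne : ∀ t, w t ≠ 0) {a b : ℝ} (hab : a ≤ b)
    (him : ∀ t ∈ Set.Icc a b, 0 ≤ (w t).im) : β b - β a = (w b).arg - (w a).arg := by
  have hβc := hβ.continuous
  have hcos : ∀ t, (w t).re / ‖w t‖ = Real.cos (β t) := fun t => by
    rw [← Complex.exp_ofReal_mul_I_re, ← Circle.coe_exp, hβ.coe_circleExp hne,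
      Complex.div_ofReal_re]
  have harg : ∀ t ∈ Set.Icc a b, (w t).arg = Real.arccos (Real.cos (β t)) := fun t ht => by
    rw [Complex.arg_of_im_nonneg_of_ne_zero (him t ht) (hne t), hcos]
  have hcont : ContinuousOn (fun t => (w t).arg + (β a - (w a).arg)) (Set.Icc a b) :=
    (ContinuousOn.congr (by fun_prop) harg).add continuousOn_const
  have hexp : ∀ t, Circle.exp (w t).arg = Circle.exp (β t) := fun t => by
    refine Subtype.ext ?_
    rw [hβ.coe_circleExp hne, eq_div_iff (Complex.ofReal_ne_zero.2 (norm_ne_zero_iff.2 (hne t))),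
      mul_comm, Circle.coe_exp, Complex.norm_mul_exp_arg_mul_I]
  have heq := Circle.isCoveringMap_exp.eqOn_of_comp_eqOn isPreconnected_Icc hβc.continuousOn hcont
    (fun t _ => by
      simp only [Function.comp, Circle.exp_add, Circle.exp_sub, hexp, div_self', mul_one])
    (Set.left_mem_Icc.2 hab) (by ring)
  linarith [heq (Set.right_mem_Icc.2 hab)]

end IsArgLift

theorem arg_eq_pi_div_two_mul {z : ℂ} {x : ℝ} (hx : x = 1 ∨ x = -1) (him : z.im = 0)
    (hre : 0 < x * z.re) : z.arg = π / 2 * (1 - x) := by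
  rcases hx with rfl | rfl
  · rw [Complex.arg_eq_zero_iff.2 ⟨by linarith, him⟩]
    ring
  · rw [Complex.arg_eq_pi_iff.2 ⟨by linarith, him⟩]
    ring

theorem deriv_nonneg_of_pos_right {T : ℝ → ℝ} {a b : ℝ} (hab : a < b) (ha : T a = 0)
    (hpos : ∀ t ∈ Set.Ioo a b, 0 < T t) : 0 ≤ deriv T a := by
  by_contra! hneg
  obtain ⟨t, hsign, ht⟩ := (((eventually_nhdsWithin_sign_eq_of_deriv_neg hneg ha).filter_mono
    nhdsWithin_le_nhds).and (Ioo_mem_nhdsGT hab)).exists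
  rw [sign_pos (hpos t ht), sign_neg (sub_neg.2 ht.1)] at hsign
  exact absurd hsign (by decide)

theorem deriv_nonpos_of_pos_left {T : ℝ → ℝ} {a b : ℝ} (hab : a < b) (hb : T b = 0)
    (hpos : ∀ t ∈ Set.Ioo a b, 0 < T t) : deriv T b ≤ 0 := by
  by_contra! hpos'
  obtain ⟨t, hsign, ht⟩ := (((eventually_nhdsWithin_sign_eq_of_deriv_pos hpos' hb).filter_mono
    nhdsWithin_le_nhds).and (Ioo_mem_nhdsLT hab)).exists
  rw [sign_pos (hpos t ht), sign_neg (sub_neg.2 ht.2)] at hsign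
  exact absurd hsign (by decide)

namespace IsArgLift

theorem sub_eq_of_im_pos (hβ : IsArgLift w β) (hne : ∀ t, w t ≠ 0) {a b : ℝ} (hab : a < b)
    (ha : (w a).im = 0) (hb : (w b).im = 0) (hpos : ∀ t ∈ Set.Ioo a b, 0 < (w t).im) {x y : ℝ}
    (hx : x = 1 ∨ x = -1) (hy : y = 1 ∨ y = -1)
    (hxa : x * (w a).re * deriv (fun t => (w t).im) a < 0)
    (hyb : y * (w b).re * deriv (fun t => (w t).im) b < 0) :
    β b - β a = -(π / 2 * (x + y)) := by
  have him : ∀ t ∈ Set.Icc a b, 0 ≤ (w t).im := by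
    intro t ht
    rcases eq_or_lt_of_le ht.1 with rfl | hat
    · exact ha.ge
    rcases eq_or_lt_of_le ht.2 with rfl | htb
    · exact hb.ge
    exact (hpos t ⟨hat, htb⟩).le
  have hra : 0 < -x * (w a).re := by
    linarith [neg_of_mul_neg_left hxa (deriv_nonneg_of_pos_right hab ha hpos)]
  have hrb : 0 < y * (w b).re :=
    pos_of_mul_neg_left hyb (deriv_nonpos_of_pos_left hab hb hpos)
  rw [hβ.sub_eq_arg_sub_arg hne hab.le him, arg_eq_pi_div_two_mul hy hb hrb,
    arg_eq_pi_div_two_mul (by rcases hx with rfl | rfl <;> simp) ha hra]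
  ring

theorem sub_eq_of_im_ne_zero (hβ : IsArgLift w β) (hne : ∀ t, w t ≠ 0)
    (hw : Continuous fun t => (w t).im) {a b : ℝ} (hab : a < b)
    (ha : (w a).im = 0) (hb : (w b).im = 0) (him : ∀ t ∈ Set.Ioo a b, (w t).im ≠ 0) {x y : ℝ}
    (hx : x = 1 ∨ x = -1) (hy : y = 1 ∨ y = -1)
    (hxa : x * (w a).re * deriv (fun t => (w t).im) a < 0)
    (hyb : y * (w b).re * deriv (fun t => (w t).im) b < 0) :
    β b - β a = -(π / 2 * (x + y)) := by
  have hsign : (∀ t ∈ Set.Ioo a b, (w t).im < 0) ∨ ∀ t ∈ Set.Ioo a b, 0 < (w t).im := by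
    have himage := ((isPreconnected_Ioo (a := a) (b := b)).image _ hw.continuousOn).ordConnected
    by_contra! hc
    obtain ⟨⟨s, hs, hs0⟩, t, ht, ht0⟩ := hc
    obtain ⟨r, hr, hr0⟩ := himage.out ⟨t, ht, rfl⟩ ⟨s, hs, rfl⟩ ⟨ht0, hs0⟩
    exact him r hr hr0
  rcases hsign with hneg | hpos
  · have hconj := hβ.star.sub_eq_of_im_pos (fun t => (map_ne_zero _).2 (hne t)) hab (by simpa)
      (by simpa) (fun t ht => by simpa using hneg t ht) (x := -x) (y := -y)
      (by rcases hx with rfl | rfl <;> simp) (by rcases hy with rfl | rfl <;> simp)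
      (by simpa using hxa) (by simpa using hyb)
    linarith
  · exact hβ.sub_eq_of_im_pos hne hab ha hb hpos hx hy hxa hyb

end IsArgLift

end TangentialComponent

namespace Ribbon

variable {n : ℕ} (a : Ribbon n)

/-- The angles of the nodes, followed by that of the first node after a full turn. -/
def angle (i : ℕ) : ℝ :=
  if hi : i < n then a.θ ⟨i, hi⟩ else a.θ ⟨0, a.n_pos⟩ + 2 * Real.pi

/-- The marks of the nodes, followed by that of the first node. -/
def mark (i : ℕ) : ℤ :=
  if hi : i < n then a.ν ⟨i, hi⟩ else a.ν ⟨0, a.n_pos⟩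

theorem angle_mark_induction {P : ℝ → ℤ → Prop} (hnode : ∀ i, P (a.θ i) (a.ν i))
    (hper : ∀ t k, P t k → P (t + 2 * Real.pi) k) (i : ℕ) : P (a.angle i) (a.mark i) := by
  unfold angle mark
  split_ifs with hi
  · exact hnode _
  · exact hper _ _ (hnode _)

theorem angle_lt_angle_succ {i : ℕ} (hi : i < n) : a.angle i < a.angle (i + 1) := by
  simp only [angle, hi, dif_pos]
  split_ifs
  · exact a.theta_mono (Fin.mk_lt_mk.2 i.lt_succ_self)
  · linarith [(a.theta_mem ⟨i, hi⟩).2, (a.theta_mem ⟨0, a.n_pos⟩).1]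

theorem periodic_deriv : Function.Periodic (deriv a.g) (2 * Real.pi) := fun t => by
  rw [← deriv_comp_add_const, a.periodic_g.funext]

theorem deriv_ne_zero_of_mem_Ioo {i : ℕ} (hi : i < n) {t : ℝ}
    (ht : t ∈ Set.Ioo (a.angle i) (a.angle (i + 1))) : deriv a.g t ≠ 0 := by
  intro h0
  simp only [angle, hi, dif_pos] at ht
  have hθi := a.theta_mem ⟨i, hi⟩
  rcases lt_or_ge t (2 * Real.pi) with htπ | htπ
  · obtain ⟨j, rfl⟩ := a.crit_only t ⟨hθi.1.trans ht.1.le, htπ⟩ h0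
    have hij : i < j := a.theta_mono.lt_iff_lt.1 ht.1
    have hin : i + 1 < n := by lia
    rw [dif_pos hin] at ht
    have hji : (j : ℕ) < i + 1 := a.theta_mono.lt_iff_lt.1 ht.2
    lia
  · split_ifs at ht with hin
    · linarith [ht.2, (a.theta_mem ⟨i + 1, hin⟩).2]
    · have hθ0 := a.theta_mem ⟨0, a.n_pos⟩
      obtain ⟨j, hj⟩ := a.crit_only (t - 2 * Real.pi) ⟨by linarith, by linarith [ht.2, hθ0.2]⟩
        ((a.periodic_deriv.sub_eq t).trans h0)
      have hj0 : (j : ℕ) < 0 :=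
        a.theta_mono.lt_iff_lt.1 (show a.θ j < a.θ ⟨0, a.n_pos⟩ by linarith [ht.2])
      lia

theorem sum_mark : ∑ i ∈ Finset.range n, a.mark i = a.sigma := by
  rw [Finset.sum_range, sigma]
  exact Finset.sum_congr rfl fun i _ => dif_pos i.2

theorem sum_mark_succ : ∑ i ∈ Finset.range n, a.mark (i + 1) = a.sigma := by
  have hcycle : a.mark n = a.mark 0 := by simp [mark, a.n_pos]
  have hshift := (Finset.sum_range_succ' a.mark n).symm.trans (Finset.sum_range_succ a.mark n)
  rw [hcycle, a.sum_mark] at hshift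
  exact add_right_cancel hshift

/-- Between consecutive nodes the tangential component keeps its sign, so the vector `w` makes
a half turn if their marks agree, and none otherwise. -/
theorem argLift_add_two_pi_sub {w : ℝ → ℂ} {β : ℝ → ℝ} (hβ : IsArgLift w β) (hne : ∀ t, w t ≠ 0)
    (hper : Function.Periodic w (2 * Real.pi)) (him : ∀ t, (w t).im = deriv a.g t)
    (hnode : ∀ i, a.ν i * (w (a.θ i)).re * deriv (deriv a.g) (a.θ i) < 0) (t : ℝ) :
    β (t + 2 * Real.pi) - β t = -(Real.pi * a.sigma) := by
  have hwim : (fun t => (w t).im) = deriv a.g := funext him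
  have hper' : Function.Periodic (deriv (deriv a.g)) (2 * Real.pi) := fun t => by
    rw [← deriv_comp_add_const, a.periodic_deriv.funext]
  have hcrit : ∀ i, deriv a.g (a.angle i) = 0 :=
    a.angle_mark_induction (P := fun t _ => deriv a.g t = 0) a.node_crit
      fun t _ h => (a.periodic_deriv t).trans h
  have hsign : ∀ i, a.mark i * (w (a.angle i)).re * deriv (deriv a.g) (a.angle i) < 0 :=
    a.angle_mark_induction (P := fun t k => k * (w t).re * deriv (deriv a.g) t < 0) hnode
      fun t k h => by rwa [hper, hper']
  have hmark : ∀ i, (a.mark i : ℝ) = 1 ∨ (a.mark i : ℝ) = -1 :=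
    a.angle_mark_induction (P := fun _ k => (k : ℝ) = 1 ∨ (k : ℝ) = -1)
      (fun i => (a.nu_sign i).imp (by simp [·]) (by simp [·])) fun _ _ h => h
  have hstep : ∀ i ∈ Finset.range n, β (a.angle (i + 1)) - β (a.angle i) =
      -(Real.pi / 2 * (a.mark i + a.mark (i + 1))) := fun i hi => by
    have hin := Finset.mem_range.1 hi
    exact hβ.sub_eq_of_im_ne_zero hne
      (hwim ▸ a.smooth_g.continuous_deriv (by exact_mod_cast le_top)) (a.angle_lt_angle_succ hin)
      ((him _).trans (hcrit _)) ((him _).trans (hcrit _))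
      (fun s hs => (him s).trans_ne (a.deriv_ne_zero_of_mem_Ioo hin hs)) (hmark i) (hmark _)
      (hwim ▸ hsign i) (hwim ▸ hsign _)
  have hturn : a.angle n = a.angle 0 + 2 * Real.pi := by simp [angle, a.n_pos]
  have htotal := Finset.sum_congr rfl hstep
  rw [Finset.sum_range_sub (fun i => β (a.angle i)), Finset.sum_neg_distrib, ← Finset.mul_sum,
    Finset.sum_add_distrib, ← Int.cast_sum, ← Int.cast_sum, sum_mark, sum_mark_succ, hturn,
    hβ.add_period_sub_eq hne hper _ t] at htotal
  linarith

end Ribbon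

section Frame

open scoped Real Gradient

variable {u : ℂ → ℝ}

/-- The gradient of `u` at the point `exp (t * I)` of the unit circle, written in the orthonormal
frame there: the real part is the radial component, the imaginary part the tangential one. -/
def frameGradient (u : ℂ → ℝ) (t : ℝ) : ℂ :=
  starRingEnd ℂ (Complex.exp (t * Complex.I)) * ∇ u (Complex.exp (t * Complex.I))

theorem exp_mul_frameGradient (u : ℂ → ℝ) (t : ℝ) :
    Complex.exp (t * Complex.I) * frameGradient u t = ∇ u (Complex.exp (t * Complex.I)) := by
  rw [frameGradient, ← mul_assoc, Complex.mul_conj, Complex.normSq_eq_norm_sq,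
    Complex.norm_exp_ofReal_mul_I]
  norm_num

theorem continuous_frameGradient (hu : ContDiff ℝ 1 u) : Continuous (frameGradient u) := by
  have hgrad := continuous_gradient hu
  unfold frameGradient
  fun_prop

theorem periodic_frameGradient (u : ℂ → ℝ) : Function.Periodic (frameGradient u) (2 * π) := by
  intro t
  have hexp : Complex.exp ((t + 2 * π : ℝ) * Complex.I) = Complex.exp (t * Complex.I) := by
    push_cast
    rw [add_mul, Complex.exp_periodic]
  rw [frameGradient, hexp, frameGradient]

theorem frameGradient_re (u : ℂ → ℝ) (t : ℝ) : (frameGradient u t).re =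
    ⟪∇ u (Complex.exp (t * Complex.I)), Complex.exp (t * Complex.I)⟫ := by
  rw [Complex.inner, frameGradient, ← Complex.conj_re]
  simp [mul_comm]

theorem frameGradient_im (hu : Differentiable ℝ u) (t : ℝ) :
    (frameGradient u t).im = deriv (fun s : ℝ => u (Complex.exp (s * Complex.I))) t := by
  have hexp : HasDerivAt (fun s : ℝ => Complex.exp (s * Complex.I))
      (Complex.exp (t * Complex.I) * Complex.I) t := by
    simpa using ((Complex.ofRealCLM.hasDerivAt (x := t)).mul_const Complex.I).cexp
  have hcomp := (hu (Complex.exp (t * Complex.I))).hasFDerivAt.comp_hasDerivAt t hexp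
  rw [← Function.comp_def u, hcomp.deriv, ← inner_gradient_left, Complex.inner, frameGradient]
  simp
  ring

theorem IsArgLift.of_frameGradient {β : ℝ → ℝ} (hβ : IsArgLift (frameGradient u) β) :
    IsArgLift (fun t => ∇ u (Complex.exp (t * Complex.I))) fun t => t + β t where
  continuous := continuous_id.add hβ.continuous
  eq_norm_mul_exp t := by
    rw [← exp_mul_frameGradient, norm_mul, Complex.norm_exp_ofReal_mul_I, one_mul]
    conv_lhs => rw [hβ.eq_norm_mul_exp t]
    rw [Complex.ofReal_add, add_mul, Complex.exp_add]
    ring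

/-- The turning of the gradient along the circle, `2π - πσ`, is the sum of its turning in the
moving frame and the full turn of the frame. -/
theorem Ribbon.exists_index_le_one {n : ℕ} (a : Ribbon n) (hu : ContDiff ℝ 1 u) {S : Finset ℂ}
    (hS : ∀ p ∈ S, ‖p‖ < 1) (hzero : ∀ z, ‖z‖ ≤ 1 → ∇ u z = 0 → z ∈ S)
    (hg : ∀ t : ℝ, u (Complex.exp (t * Complex.I)) = a.g t)
    (hnode : ∀ i, a.ν i * (frameGradient u (a.θ i)).re * deriv (deriv a.g) (a.θ i) < 0) :
    ∃ index : ℂ → ℤ, (∀ p ∈ S, index p ≤ 1) ∧ 2 - a.sigma = 2 * ∑ p ∈ S, index p := by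
  have hne : ∀ t, frameGradient u t ≠ 0 := fun t h0 =>
    gradient_exp_ne_zero hS hzero t (by rw [← exp_mul_frameGradient, h0, mul_zero])
  obtain ⟨β, hβ⟩ := exists_isArgLift (continuous_frameGradient hu) hne
  obtain ⟨index, hindex, hsum⟩ := hβ.of_frameGradient.exists_index_le_one hu hS hzero
  have hturn := a.argLift_add_two_pi_sub hβ hne (periodic_frameGradient u)
    (fun t => by rw [frameGradient_im (hu.differentiable one_ne_zero), funext hg]) hnode (-(π / 4))
  rw [show -(π / 4) + 2 * π = 7 * π / 4 by ring] at hturn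
  refine ⟨index, hindex, ?_⟩
  have hreal : (2 : ℝ) - a.sigma = 2 * ∑ p ∈ S, (index p : ℝ) :=
    mul_left_cancel₀ Real.pi_ne_zero (by linarith)
  exact_mod_cast hreal

end Frame

section Extension

open scoped Gradient

/-- The identification of the plane with `ℂ`. -/
def complexEquiv : ℂ ≃ₗᵢ[ℝ] E2 := Complex.orthonormalBasisOneI.repr

theorem complexEquiv_exp (t : ℝ) : complexEquiv (Complex.exp (t * Complex.I)) = sphPt t := by
  ext i
  fin_cases i <;> simp [complexEquiv, sphPt, Complex.orthonormalBasisOneI_repr_apply,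
    Complex.exp_ofReal_mul_I_re, Complex.exp_ofReal_mul_I_im]

theorem gradient_comp_linearIsometryEquiv {E F : Type*} [NormedAddCommGroup E]
    [InnerProductSpace ℝ E] [CompleteSpace E] [NormedAddCommGroup F] [InnerProductSpace ℝ F]
    [CompleteSpace F] (L : E ≃ₗᵢ[ℝ] F) (f : F → ℝ) (x : E) :
    ∇ (f ∘ L) x = L.symm (∇ f (L x)) := by
  refine ext_inner_right ℝ fun y => ?_
  have hchain : fderiv ℝ (f ∘ L) x =
      (fderiv ℝ f (L x)).comp (L.toContinuousLinearEquiv : E →L[ℝ] F) :=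
    L.toContinuousLinearEquiv.comp_right_fderiv
  rw [inner_gradient_left, hchain, L.symm.inner_map_eq_flip, LinearIsometryEquiv.symm_symm,
    inner_gradient_left]
  rfl

variable {n : ℕ} {a : Ribbon n} {f : E2 → ℝ}

theorem gradient_comp_complexEquiv_eq_zero_iff (f : E2 → ℝ) (z : ℂ) :
    ∇ (f ∘ complexEquiv) z = 0 ↔ fderiv ℝ f (complexEquiv z) = 0 := by
  rw [gradient_comp_linearIsometryEquiv, map_eq_zero_iff _ complexEquiv.symm.injective, gradient,
    map_eq_zero_iff _ (LinearIsometryEquiv.injective _)]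

theorem IsExtension.node_sign (hf : IsExtension a f) (i : Fin n) :
    a.ν i * (frameGradient (f ∘ complexEquiv) (a.θ i)).re * deriv (deriv a.g) (a.θ i) < 0 := by
  rw [frameGradient_re, gradient_comp_linearIsometryEquiv, LinearIsometryEquiv.inner_map_eq_flip,
    LinearIsometryEquiv.symm_symm, complexEquiv_exp]
  rcases (a.node_nondeg i).lt_or_gt with hmax | hmin
  · exact mul_neg_of_pos_of_neg ((hf.2.2.2 i).1 hmax) hmax
  · exact mul_neg_of_neg_of_pos ((hf.2.2.2 i).2 hmin) hmin

theorem IsExtension.exists_index_le_one (hf : IsExtension a f) (hfin : (critPts f).Finite) :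
    ∃ index : E2 → ℤ, (∀ x ∈ hfin.toFinset, index x ≤ 1) ∧
      2 - a.sigma = 2 * ∑ x ∈ hfin.toFinset, index x := by
  have hu : ContDiff ℝ 1 (f ∘ complexEquiv) :=
    (hf.1.of_le (by exact_mod_cast le_top)).comp complexEquiv.contDiff
  let S : Finset ℂ := hfin.toFinset.map complexEquiv.symm.toEquiv.toEmbedding
  have hmem : ∀ z, z ∈ S ↔ ‖z‖ < 1 ∧ fderiv ℝ f (complexEquiv z) = 0 := fun z => by
    rw [Finset.mem_map_equiv, hfin.mem_toFinset]
    simp [critPts]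
  have hzero : ∀ z, ‖z‖ ≤ 1 → ∇ (f ∘ complexEquiv) z = 0 → z ∈ S := fun z hz h0 => by
    rw [gradient_comp_complexEquiv_eq_zero_iff] at h0
    refine (hmem z).2 ⟨hz.lt_of_ne fun h1 => hf.2.2.1 (complexEquiv z) ?_ h0, h0⟩
    rw [mem_sphere_zero_iff_norm, complexEquiv.norm_map, h1]
  obtain ⟨index, hindex, hsum⟩ := a.exists_index_le_one hu (fun p hp => ((hmem p).1 hp).1) hzero
    (fun t => by rw [Function.comp, complexEquiv_exp, hf.2.1]) hf.node_sign
  exact ⟨index ∘ complexEquiv.symm, fun x hx => hindex _ (Finset.mem_map_of_mem _ hx),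
    by rwa [Finset.sum_map] at hsum⟩

theorem IsExtension.two_sub_sigma_le (hf : IsExtension a f) (hfin : (critPts f).Finite) :
    2 - a.sigma ≤ 2 * (critPts f).ncard := by
  obtain ⟨index, hindex, hsum⟩ := hf.exists_index_le_one hfin
  have hle := Finset.sum_le_card_nsmul _ _ _ hindex
  rw [nsmul_one, ← Set.ncard_eq_toFinset_card _ hfin] at hle
  linarith

theorem IsExtension.sigma_eq_two (hf : IsExtension a f) (hempty : critPts f = ∅) :
    a.sigma = 2 := by
  obtain ⟨index, -, hsum⟩ := hf.exists_index_le_one (hempty ▸ Set.finite_empty)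
  simp only [hempty, Set.Finite.toFinset_empty, Finset.sum_empty] at hsum
  lia

theorem natCast_le_gammaR {m : ℕ} (hm : 2 * m ≤ 2 - a.sigma) : m ≤ gammaR a := by
  refine le_sInf ?_
  rintro _ ⟨f, hf, rfl⟩
  rcases (critPts f).finite_or_infinite with hfin | hinf
  · have hle := hf.two_sub_sigma_le hfin
    rw [← hfin.cast_ncard_eq]
    exact_mod_cast (by lia : m ≤ (critPts f).ncard)
  · exact hinf.encard_eq ▸ le_top

theorem one_le_gammaR (hσ : a.sigma ≠ 2) : 1 ≤ gammaR a := by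
  refine le_sInf ?_
  rintro _ ⟨f, hf, rfl⟩
  rw [Set.one_le_encard_iff_nonempty, Set.nonempty_iff_ne_empty]
  exact fun hempty => hσ (hf.sigma_eq_two hempty)

end Extension

theorem stmt_10_general {n m : ℕ} (a : Ribbon n) (b : Ribbon m) (hσ : b.sigma = -a.sigma)
    (h2 : a.sigma ≠ 2) (h2' : a.sigma ≠ -2) :
    ((2 + a.sigma.natAbs / 2 : ℕ) : ℕ∞) ≤ gammaR a + gammaR b := by
  rw [show 2 + a.sigma.natAbs / 2 = 1 + (1 + a.sigma.natAbs / 2) by lia, Nat.cast_add, Nat.cast_one]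
  rcases le_total 0 a.sigma with hpos | hneg
  · exact add_le_add (one_le_gammaR h2) (natCast_le_gammaR (by lia))
  · rw [add_comm (gammaR a)]
    exact add_le_add (one_le_gammaR (by lia)) (natCast_le_gammaR (by lia))

/-- If `a` is a ribbon with `σ(a) ∉ {−2, 2}` and `b = ā` is obtained from `a` by reversing the
sign of every node, then `γ(a) + γ(ā) ≥ 2 + |σ(a)|/2`. -/
theorem stmt_10 (n : ℕ) (a b : Ribbon n)
    (hg : b.g = a.g) (hθ : b.θ = a.θ) (hν : ∀ i, b.ν i = -(a.ν i))
    (h2 : a.sigma ≠ 2) (h2' : a.sigma ≠ -2) :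
    ((2 + a.sigma.natAbs / 2 : ℕ) : ℕ∞) ≤ gammaR a + gammaR b := by
  exact stmt_10_general a b (by simp only [Ribbon.sigma, hν, Finset.sum_neg_distrib]) h2 h2'
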